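/- arXiv:1711.07409 — 2 statements merged into one kernel-verified Lean document; each statement's English description precedes it below -/
import Mathlib

section
/- Let M be a TS-module of finite length and degree one and χ a smooth character of T such that dim π_0(M)_{T,χ} ≤ 1 and (M^S)^{T,χ} ≠ 0. Then there is no injective TS-morphism 𝔼[χ] → M. -/
noncomputable section

open scoped Classical

namespace PSW

/-! ### The affine group `λ.b : x ↦ λ·x + b` over a field `K`. -/

@[ext]
structure Aff (K : Type*) [Field K] where
  t : Kˣ
  s : K

namespace Aff

variable {K : Type*} [Field K]

instance : Mul (Aff K) := ⟨fun g h => ⟨g.t * h.t, g.s + (g.t : K) * h.s⟩⟩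
instance : One (Aff K) := ⟨⟨1, 0⟩⟩
instance : Inv (Aff K) := ⟨fun g => ⟨g.t⁻¹, -(((g.t⁻¹ : Kˣ) : K) * g.s)⟩⟩

@[simp] lemma mul_t (g h : Aff K) : (g * h).t = g.t * h.t := rfl
@[simp] lemma mul_s (g h : Aff K) : (g * h).s = g.s + (g.t : K) * h.s := rfl
@[simp] lemma one_t : (1 : Aff K).t = 1 := rfl
@[simp] lemma one_s : (1 : Aff K).s = 0 := rfl
@[simp] lemma inv_t (g : Aff K) : (g⁻¹).t = g.t⁻¹ := rfl
@[simp] lemma inv_s (g : Aff K) : (g⁻¹).s = -(((g.t⁻¹ : Kˣ) : K) * g.s) := rfl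

instance : Group (Aff K) where
  mul_assoc a b c := by
    ext
    · simp [mul_assoc]
    · simp only [mul_s, mul_t, Units.val_mul]; ring
  one_mul a := by ext <;> simp
  mul_one a := by ext <;> simp
  inv_mul_cancel a := by
    ext
    · simp
    · simp

/-- The element `x_λ` of the group `TS`. -/
def xT (u : Kˣ) : Aff K := ⟨u, 0⟩

/-- The element `s_b` of the group `TS`. -/
def sS (b : K) : Aff K := ⟨1, b⟩

@[simp] lemma xT_t (u : Kˣ) : (xT u : Aff K).t = u := rfl
@[simp] lemma xT_s (u : Kˣ) : (xT u : Aff K).s = 0 := rfl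
@[simp] lemma sS_t (b : K) : (sS b : Aff K).t = 1 := rfl
@[simp] lemma sS_s (b : K) : (sS b : Aff K).s = b := rfl

/-- `T ≅ k^×` as a subgroup of `TS`. -/
def xTHom : Kˣ →* Aff K where
  toFun := xT
  map_one' := rfl
  map_mul' u v := by ext <;> simp [xT]

@[simp] lemma xTHom_apply (u : Kˣ) : (xTHom u : Aff K) = xT u := rfl

lemma mul_sS (g : Aff K) (b : K) : g * sS b = sS ((g.t : K) * b) * g := by
  ext
  · simp
  · simp [add_comm]

lemma sS_mul (b : K) (g : Aff K) : sS b * g = g * sS (((g.t⁻¹ : Kˣ) : K) * b) := by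
  ext
  · simp
  · simp [Units.mul_inv_cancel_left, add_comm]

lemma aff_decomp (g : Aff K) : g = xT g.t * sS (((g.t⁻¹ : Kˣ) : K) * g.s) := by
  ext
  · simp
  · simp [Units.mul_inv_cancel_left]

instance [TopologicalSpace K] : TopologicalSpace (Aff K) :=
  TopologicalSpace.induced (fun g : Aff K => ((g.t, g.s) : Kˣ × K)) inferInstance

end Aff

/-! ### Generalities on representations of a monoid on complex vector spaces. -/

namespace GRep

variable {G : Type*} [Monoid G]

section MonoidModules

variable {V W : Type*} [AddCommMonoid V] [Module ℂ V] [AddCommMonoid W] [Module ℂ W]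

/-- A submodule invariant under the representation. -/
def Invariant (ρ : Representation ℂ G V) (U : Submodule ℂ V) : Prop :=
  ∀ (g : G) (v : V), v ∈ U → ρ g v ∈ U

/-- Equivariance of a linear map with respect to two representations. -/
def Equivariant (ρ : Representation ℂ G V) (σ : Representation ℂ G W) (f : V →ₗ[ℂ] W) : Prop :=
  ∀ (g : G) (v : V), f (ρ g v) = σ g (f v)

/-- Isomorphism of representations. -/
def Iso (ρ : Representation ℂ G V) (σ : Representation ℂ G W) : Prop :=
  ∃ e : V ≃ₗ[ℂ] W, ∀ (g : G) (v : V), e (ρ g v) = σ g (e v)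

/-- Irreducibility. -/
def Irred (ρ : Representation ℂ G V) : Prop :=
  Nontrivial V ∧ ∀ U : Submodule ℂ V, Invariant ρ U → U = ⊥ ∨ U = ⊤

/-- Subrepresentation on an invariant submodule. -/
def sub (ρ : Representation ℂ G V) {U : Submodule ℂ V} (hU : Invariant ρ U) :
    Representation ℂ G ↥U where
  toFun g := (ρ g).restrict fun v hv => hU g v hv
  map_one' := by
    apply LinearMap.ext; intro v; apply Subtype.ext
    simp [LinearMap.restrict_apply]
  map_mul' g h := by
    apply LinearMap.ext; intro v; apply Subtype.ext
    simp [LinearMap.restrict_apply]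

@[simp] lemma sub_apply (ρ : Representation ℂ G V) {U : Submodule ℂ V} (hU : Invariant ρ U)
    (g : G) (v : ↥U) : ((sub ρ hU g v : ↥U) : V) = ρ g (v : V) := rfl

lemma ker_invariant (ρ : Representation ℂ G V) (σ : Representation ℂ G W)
    (f : V →ₗ[ℂ] W) (hf : Equivariant ρ σ f) : Invariant ρ (LinearMap.ker f) := by
  intro g v hv
  rw [LinearMap.mem_ker] at hv ⊢
  rw [hf g v, hv, map_zero]

lemma range_invariant (ρ : Representation ℂ G V) (σ : Representation ℂ G W)
    (f : V →ₗ[ℂ] W) (hf : Equivariant ρ σ f) : Invariant σ (LinearMap.range f) := by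
  rintro g w ⟨v, rfl⟩
  exact ⟨ρ g v, hf g v⟩

lemma map_invariant (ρ : Representation ℂ G V) (σ : Representation ℂ G W)
    (f : V →ₗ[ℂ] W) (hf : Equivariant ρ σ f) (U : Submodule ℂ V) (hU : Invariant ρ U) :
    Invariant σ (U.map f) := by
  rintro g w ⟨v, hv, rfl⟩
  exact ⟨ρ g v, hU g v hv, hf g v⟩

end MonoidModules

section GroupModules

variable {V W : Type*} [AddCommGroup V] [Module ℂ V] [AddCommGroup W] [Module ℂ W]

/-- Quotient representation. -/
def quot (ρ : Representation ℂ G V) (U : Submodule ℂ V) (hU : Invariant ρ U) :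
    Representation ℂ G (V ⧸ U) where
  toFun g := U.mapQ U (ρ g) fun v hv => hU g v hv
  map_one' := by
    apply LinearMap.ext; intro x
    obtain ⟨v, rfl⟩ := Submodule.Quotient.mk_surjective U x
    simp [Submodule.mapQ_apply]
  map_mul' g h := by
    apply LinearMap.ext; intro x
    obtain ⟨v, rfl⟩ := Submodule.Quotient.mk_surjective U x
    simp [Submodule.mapQ_apply]

@[simp] lemma quot_apply (ρ : Representation ℂ G V) (U : Submodule ℂ V) (hU : Invariant ρ U)
    (g : G) (v : V) :
    quot ρ U hU g (Submodule.Quotient.mk v) = Submodule.Quotient.mk (ρ g v) := rfl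

/-- Subquotient representation on `B/A`. -/
def subquot (ρ : Representation ℂ G V) {A B : Submodule ℂ V}
    (hA : Invariant ρ A) (hB : Invariant ρ B) :
    Representation ℂ G (↥B ⧸ A.comap B.subtype) :=
  quot (sub ρ hB) (A.comap B.subtype) fun g v hv => hA g v.1 hv

lemma mkQ_equivariant (ρ : Representation ℂ G V) (U : Submodule ℂ V) (hU : Invariant ρ U) :
    Equivariant ρ (quot ρ U hU) U.mkQ := by
  intro g v
  show Submodule.Quotient.mk (ρ g v) = quot ρ U hU g (Submodule.Quotient.mk v)
  rw [quot_apply]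

end GroupModules

end GRep

/-! ### TS-modules: representations of the affine group. -/

/-- A `TS`-module structure on `V` is a representation of the group `TS ≅ Gl_a(1)`. -/
abbrev Rep (K : Type*) [Field K] (V : Type*) [AddCommGroup V] [Module ℂ V] :=
  Representation ℂ (Aff K) V

section RepDefs

open Aff

variable {K : Type*} [Field K]
variable {V W : Type*} [AddCommGroup V] [Module ℂ V] [AddCommGroup W] [Module ℂ W]

/-- Smoothness: every vector has open stabilizer. -/
def IsSmoothRep [TopologicalSpace K] (ρ : Rep K V) : Prop :=
  ∀ v : V, IsOpen {g : Aff K | ρ g v = v}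

/-- Smoothness of a `T`-module, i.e. of a representation of `T ≅ k^×`. -/
def TIsSmooth {X : Type*} [AddCommMonoid X] [Module ℂ X] [TopologicalSpace K]
    (τ : Representation ℂ Kˣ X) : Prop :=
  ∀ x : X, IsOpen {u : Kˣ | τ u x = x}

/-- Smooth character of `T ≅ k^×` (open kernel, equivalently locally constant). -/
def SmoothMulChar [TopologicalSpace K] (χ : Kˣ →* ℂˣ) : Prop :=
  IsOpen {u : Kˣ | χ u = 1}

/-- The space `V^S` of `S`-invariants. -/
def sInv (ρ : Rep K V) : Submodule ℂ V where
  carrier := {v | ∀ b : K, ρ (sS b) v = v}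
  zero_mem' := fun b => map_zero _
  add_mem' {a b} ha hb := fun c => by rw [map_add, ha c, hb c]
  smul_mem' c v hv := fun b => by rw [map_smul, hv b]

@[simp] lemma mem_sInv (ρ : Rep K V) (v : V) :
    v ∈ sInv ρ ↔ ∀ b : K, ρ (sS b) v = v := Iff.rfl

/-- The `χ`-eigenspace `X^{T,χ}` of a `T`-module. -/
def tEigenT {X : Type*} [AddCommMonoid X] [Module ℂ X]
    (τ : Representation ℂ Kˣ X) (χ : Kˣ →* ℂˣ) : Submodule ℂ X where
  carrier := {x | ∀ u : Kˣ, τ u x = (χ u : ℂ) • x}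
  zero_mem' := fun u => by simp
  add_mem' {a b} ha hb := fun u => by rw [map_add, ha u, hb u, smul_add]
  smul_mem' c x hx := fun u => by rw [map_smul, hx u]; exact smul_comm c ((χ u : ℂ)) x

@[simp] lemma mem_tEigenT {X : Type*} [AddCommMonoid X] [Module ℂ X]
    (τ : Representation ℂ Kˣ X) (χ : Kˣ →* ℂˣ) (x : X) :
    x ∈ tEigenT τ χ ↔ ∀ u : Kˣ, τ u x = (χ u : ℂ) • x := Iff.rfl

/-- The `χ`-eigenspace `V^{T,χ}` of a `TS`-module. -/
def tEigen (ρ : Rep K V) (χ : Kˣ →* ℂˣ) : Submodule ℂ V := tEigenT (ρ.comp xTHom) χ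

/-- The kernel of the projection to the `S`-coinvariants `V_S`. -/
def sCoinvKer (ρ : Rep K V) : Submodule ℂ V :=
  Submodule.span ℂ {w : V | ∃ (b : K) (v : V), w = ρ (sS b) v - v}

/-- The kernel of the projection to the twisted coinvariants `V_{S,ψ'}`. -/
def sTwistKer (ρ : Rep K V) (ψ' : AddChar K ℂ) : Submodule ℂ V :=
  Submodule.span ℂ {w : V | ∃ (b : K) (v : V), w = ρ (sS b) v - ψ' b • v}

/-- The kernel of the projection to the `χ`-coinvariants `X_{T,χ}` of a `T`-module. -/
def tTwistKerT {X : Type*} [AddCommGroup X] [Module ℂ X]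
    (τ : Representation ℂ Kˣ X) (χ : Kˣ →* ℂˣ) : Submodule ℂ X :=
  Submodule.span ℂ {w : X | ∃ (u : Kˣ) (x : X), w = τ u x - (χ u : ℂ) • x}

/-- The kernel of the projection to the `χ`-coinvariants `V_{T,χ}` of a `TS`-module. -/
def tTwistKer (ρ : Rep K V) (χ : Kˣ →* ℂˣ) : Submodule ℂ V := tTwistKerT (ρ.comp xTHom) χ

lemma sCoinvKer_invariant (ρ : Rep K V) : GRep.Invariant ρ (sCoinvKer ρ) := by
  intro g v hv
  have h : sCoinvKer ρ ≤ Submodule.comap (ρ g) (sCoinvKer ρ) := by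
    refine Submodule.span_le.2 ?_
    rintro w ⟨b, v', rfl⟩
    simp only [SetLike.mem_coe, Submodule.mem_comap, map_sub]
    have h1 : ρ g (ρ (sS b) v') = ρ (sS ((g.t : K) * b)) (ρ g v') := by
      rw [← Module.End.mul_apply, ← map_mul, mul_sS, map_mul, Module.End.mul_apply]
    rw [h1]
    exact Submodule.subset_span ⟨(g.t : K) * b, ρ g v', rfl⟩
  exact h hv

lemma sInv_invariant (ρ : Rep K V) : GRep.Invariant ρ (sInv ρ) := by
  intro g v hv
  rw [mem_sInv] at hv ⊢
  intro b
  have h1 : ρ (sS b) (ρ g v) = ρ g (ρ (sS (((g.t⁻¹ : Kˣ) : K) * b)) v) := by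
    rw [← Module.End.mul_apply, ← map_mul, sS_mul, map_mul, Module.End.mul_apply]
  rw [h1, hv _]

/-- The `S`-coinvariants `π₀(V) = V_S` as a `TS`-module (`S` acting trivially). -/
def piZeroRep (ρ : Rep K V) : Rep K (V ⧸ sCoinvKer ρ) :=
  GRep.quot ρ (sCoinvKer ρ) (sCoinvKer_invariant ρ)

/-- The `S`-coinvariants `π₀(V) = V_S` as a `T`-module. -/
def piZeroT (ρ : Rep K V) : Representation ℂ Kˣ (V ⧸ sCoinvKer ρ) :=
  (piZeroRep ρ).comp xTHom

/-- The `T`-module structure on `κ(V) = V^S`. -/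
def sInvT (ρ : Rep K V) : Representation ℂ Kˣ ↥(sInv ρ) :=
  (GRep.sub ρ (sInv_invariant ρ)).comp xTHom

/-- A `TS`-module is perfect if all its eigenspaces `V^{T,χ}` for smooth `χ` vanish. -/
def Perfect [TopologicalSpace K] (ρ : Rep K V) : Prop :=
  ∀ χ : Kˣ →* ℂˣ, SmoothMulChar χ → tEigen ρ χ = ⊥

/-- A finite-dimensional `T`-module is cyclic if each generalized eigenspace is a single
Jordan block; equivalently all eigenspaces `X^{T,χ}` have dimension at most one. -/
def TCyclic {X : Type*} [AddCommGroup X] [Module ℂ X]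
    (τ : Representation ℂ Kˣ X) : Prop :=
  ∀ χ : Kˣ →* ℂˣ, Module.finrank ℂ ↥(tEigenT τ χ) ≤ 1

lemma sCoinvKer_le_comap (ρ : Rep K V) (σ : Rep K W)
    (f : V →ₗ[ℂ] W) (hf : GRep.Equivariant ρ σ f) :
    sCoinvKer ρ ≤ (sCoinvKer σ).comap f := by
  refine Submodule.span_le.2 ?_
  rintro w ⟨b, v, rfl⟩
  simp only [SetLike.mem_coe, Submodule.mem_comap, map_sub]
  rw [hf]
  exact Submodule.subset_span ⟨b, f v, rfl⟩

/-- The map induced by an equivariant map on the `S`-coinvariants `π₀`. -/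
def piZeroMap (ρ : Rep K V) (σ : Rep K W) (f : V →ₗ[ℂ] W) (hf : GRep.Equivariant ρ σ f) :
    (V ⧸ sCoinvKer ρ) →ₗ[ℂ] (W ⧸ sCoinvKer σ) :=
  Submodule.mapQ _ _ f (sCoinvKer_le_comap ρ σ f hf)

lemma piZeroMap_equivariant (ρ : Rep K V) (σ : Rep K W) (f : V →ₗ[ℂ] W)
    (hf : GRep.Equivariant ρ σ f) :
    GRep.Equivariant (piZeroRep ρ) (piZeroRep σ) (piZeroMap ρ σ f hf) := by
  intro g x
  obtain ⟨v, rfl⟩ := Submodule.Quotient.mk_surjective _ x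
  show piZeroMap ρ σ f hf (piZeroRep ρ g (Submodule.Quotient.mk v))
      = piZeroRep σ g (piZeroMap ρ σ f hf (Submodule.Quotient.mk v))
  rw [show piZeroRep ρ g (Submodule.Quotient.mk v) = Submodule.Quotient.mk (ρ g v) from rfl]
  rw [show piZeroMap ρ σ f hf (Submodule.Quotient.mk v) = Submodule.Quotient.mk (f v) from rfl]
  rw [show piZeroMap ρ σ f hf (Submodule.Quotient.mk (ρ g v))
      = Submodule.Quotient.mk (f (ρ g v)) from rfl]
  rw [show piZeroRep σ g (Submodule.Quotient.mk (f v)) = Submodule.Quotient.mk (σ g (f v)) from rfl]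
  rw [hf]

lemma kappaImg_invariant (ρ : Rep K V) :
    GRep.Invariant (piZeroT ρ) ((sInv ρ).map (sCoinvKer ρ).mkQ) := by
  rintro u w ⟨v, hv, rfl⟩
  refine ⟨ρ (xT u) v, sInv_invariant ρ (xT u) v hv, ?_⟩
  rfl

end RepDefs

/-! ### Composition series and degree. -/

/-- A composition series for a `TS`-module, witnessing finite length: a maximal chain of
invariant submodules (the subquotients are then irreducible). -/
structure CompSeries {K : Type*} [Field K] {V : Type*} [AddCommGroup V] [Module ℂ V]
    (ρ : Rep K V) where
  n : ℕ
  W : ℕ → Submodule ℂ V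
  bot : W 0 = ⊥
  top : W n = ⊤
  inv : ∀ i, GRep.Invariant ρ (W i)
  lt : ∀ i < n, W i < W (i + 1)
  maximal : ∀ i < n, ∀ C : Submodule ℂ V, GRep.Invariant ρ C → W i ≤ C → C ≤ W (i + 1) →
    C = W i ∨ C = W (i + 1)

/-- The number of Jordan–Hölder constituents of a composition series isomorphic to a given
representation `σ` (applied with `σ = 𝕊`, this is the degree). -/
def CompSeries.deg {K : Type*} [Field K] {V : Type*} [AddCommGroup V] [Module ℂ V]
    {ρ : Rep K V} (c : CompSeries ρ) {W₀ : Type*} [AddCommMonoid W₀] [Module ℂ W₀]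
    (σ : Representation ℂ (Aff K) W₀) : ℕ :=
  (Finset.univ.filter fun i : Fin c.n =>
    GRep.Iso (GRep.subquot ρ (c.inv i.1) (c.inv (i.1 + 1))) σ).card

/-! ### Fiber products of a `T`-module with a `TS`-module over a `T`-module. -/

section Fiber

open Aff

variable {K : Type*} [Field K]
variable {X Y E : Type*} [AddCommGroup X] [Module ℂ X] [AddCommGroup Y] [Module ℂ Y]
  [AddCommGroup E] [Module ℂ E]

/-- The product `TS`-module `X × E` where `S` acts trivially on the `T`-module `X`. -/
def prodRepTE (τ : Representation ℂ Kˣ X) (ρ : Rep K E) : Rep K (X × E) where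
  toFun g := (τ g.t).prodMap (ρ g)
  map_one' := by
    apply LinearMap.ext; rintro ⟨x, v⟩
    simp
  map_mul' g h := by
    apply LinearMap.ext; rintro ⟨x, v⟩
    simp [map_mul]

/-- The underlying space of the fiber product `𝔼[f] = X ×_Y E`. -/
def fiberKer (f : X →ₗ[ℂ] Y) (q : E →ₗ[ℂ] Y) : Submodule ℂ (X × E) :=
  LinearMap.ker (f.comp (LinearMap.fst ℂ X E) - q.comp (LinearMap.snd ℂ X E))

lemma mem_fiberKer (f : X →ₗ[ℂ] Y) (q : E →ₗ[ℂ] Y) (p : X × E) :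
    p ∈ fiberKer f q ↔ f p.1 = q p.2 := by
  simp [fiberKer, sub_eq_zero]

lemma fiber_invariant (τX : Representation ℂ Kˣ X) (ρE : Rep K E)
    (τY : Representation ℂ Kˣ Y) (f : X →ₗ[ℂ] Y) (q : E →ₗ[ℂ] Y)
    (hf : ∀ (u : Kˣ) (x : X), f (τX u x) = τY u (f x))
    (hq : sCoinvKer ρE ≤ LinearMap.ker q)
    (hqT : ∀ (u : Kˣ) (v : E), q (ρE (xT u) v) = τY u (q v)) :
    GRep.Invariant (prodRepTE τX ρE) (fiberKer f q) := by
  intro g p hp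
  rw [mem_fiberKer] at hp ⊢
  have hsb : q (ρE (sS (((g.t⁻¹ : Kˣ) : K) * g.s)) p.2) = q p.2 := by
    have h1 : ρE (sS (((g.t⁻¹ : Kˣ) : K) * g.s)) p.2 - p.2 ∈ sCoinvKer ρE :=
      Submodule.subset_span ⟨_, _, rfl⟩
    have h2 := hq h1
    rw [LinearMap.mem_ker, map_sub, sub_eq_zero] at h2
    exact h2
  have hdecomp : ρE g p.2 = ρE (xT g.t) (ρE (sS (((g.t⁻¹ : Kˣ) : K) * g.s)) p.2) := by
    conv_lhs => rw [aff_decomp g]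
    rw [map_mul, Module.End.mul_apply]
  have h1 : ((prodRepTE τX ρE) g p).1 = τX g.t p.1 := rfl
  have h2 : ((prodRepTE τX ρE) g p).2 = ρE g p.2 := rfl
  rw [h1, h2, hf, hp, hdecomp, hqT, hsb]

end Fiber

/-! ### Jordan blocks of finite-dimensional `T`-modules. -/

section Jordan

variable {K : Type*} [Field K]
variable {X : Type*} [AddCommGroup X] [Module ℂ X]

/-- A Jordan block of a `T`-module: a nonzero indecomposable invariant direct summand. -/
def IsJordanBlock (τ : Representation ℂ Kˣ X) (J : Submodule ℂ X) : Prop :=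
  J ≠ ⊥ ∧ GRep.Invariant τ J ∧ (∃ C : Submodule ℂ X, GRep.Invariant τ C ∧ IsCompl J C) ∧
    ∀ A B : Submodule ℂ X, GRep.Invariant τ A → GRep.Invariant τ B → A ≤ J → B ≤ J →
      A ⊓ B = ⊥ → A ⊔ B = J → A = ⊥ ∨ B = ⊥

end Jordan

/-! ### Invariants and coinvariants for a normal subgroup of an arbitrary group. -/

section Grp

variable {Γ : Type*} [Group Γ]
variable {V W : Type*} [AddCommGroup V] [Module ℂ V] [AddCommGroup W] [Module ℂ W]

/-- Invariants `V^N` under a subgroup `N`. -/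
def grpInv (ρ : Representation ℂ Γ V) (N : Subgroup Γ) : Submodule ℂ V where
  carrier := {v | ∀ n ∈ N, ρ n v = v}
  zero_mem' := fun n _ => map_zero _
  add_mem' {a b} ha hb := fun n hn => by rw [map_add, ha n hn, hb n hn]
  smul_mem' c v hv := fun n hn => by rw [map_smul, hv n hn]

@[simp] lemma mem_grpInv (ρ : Representation ℂ Γ V) (N : Subgroup Γ) (v : V) :
    v ∈ grpInv ρ N ↔ ∀ n ∈ N, ρ n v = v := Iff.rfl

/-- The kernel of the projection to the coinvariants `V_N` under a subgroup `N`. -/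
def grpCoinvKer (ρ : Representation ℂ Γ V) (N : Subgroup Γ) : Submodule ℂ V :=
  Submodule.span ℂ {w : V | ∃ n ∈ N, ∃ v : V, w = ρ n v - v}

lemma grpInv_invariant (ρ : Representation ℂ Γ V) (N : Subgroup Γ) [hN : N.Normal] :
    GRep.Invariant ρ (grpInv ρ N) := by
  intro γ v hv
  rw [mem_grpInv] at hv ⊢
  intro n hn
  have hmem : γ⁻¹ * n * γ ∈ N := by
    have := hN.conj_mem n hn γ⁻¹
    simpa using this
  have key : ρ n (ρ γ v) = ρ γ (ρ (γ⁻¹ * n * γ) v) := by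
    rw [← Module.End.mul_apply, ← map_mul, ← Module.End.mul_apply, ← map_mul]
    congr 1
    group
  rw [key, hv _ hmem]

lemma grpCoinvKer_invariant (ρ : Representation ℂ Γ V) (N : Subgroup Γ) [hN : N.Normal] :
    GRep.Invariant ρ (grpCoinvKer ρ N) := by
  intro γ v hv
  have h : grpCoinvKer ρ N ≤ Submodule.comap (ρ γ) (grpCoinvKer ρ N) := by
    refine Submodule.span_le.2 ?_
    rintro w ⟨n, hn, v', rfl⟩
    simp only [SetLike.mem_coe, Submodule.mem_comap, map_sub]
    have key : ρ γ (ρ n v') = ρ (γ * n * γ⁻¹) (ρ γ v') := by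
      rw [← Module.End.mul_apply, ← map_mul, ← Module.End.mul_apply, ← map_mul]
      congr 1
      group
    rw [key]
    exact Submodule.subset_span ⟨γ * n * γ⁻¹, hN.conj_mem n hn γ, ρ γ v', rfl⟩
  exact h hv

/-- The map induced on `N`-invariants by an equivariant map. -/
def grpInvRestrict (ρ : Representation ℂ Γ V) (σ : Representation ℂ Γ W) (N : Subgroup Γ)
    (f : V →ₗ[ℂ] W) (hf : GRep.Equivariant ρ σ f) : ↥(grpInv ρ N) →ₗ[ℂ] ↥(grpInv σ N) :=
  f.restrict (fun v hv => by
    rw [mem_grpInv] at hv ⊢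
    intro n hn
    rw [← hf n v, hv n hn])

lemma grpCoinvKer_le_comap (ρ : Representation ℂ Γ V) (σ : Representation ℂ Γ W) (N : Subgroup Γ)
    (f : V →ₗ[ℂ] W) (hf : GRep.Equivariant ρ σ f) :
    grpCoinvKer ρ N ≤ (grpCoinvKer σ N).comap f := by
  refine Submodule.span_le.2 ?_
  rintro w ⟨n, hn, v, rfl⟩
  simp only [SetLike.mem_coe, Submodule.mem_comap, map_sub]
  rw [hf]
  exact Submodule.subset_span ⟨n, hn, f v, rfl⟩

/-- The map induced on `N`-coinvariants by an equivariant map. -/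
def grpCoinvMap (ρ : Representation ℂ Γ V) (σ : Representation ℂ Γ W) (N : Subgroup Γ)
    (f : V →ₗ[ℂ] W) (hf : GRep.Equivariant ρ σ f) :
    (V ⧸ grpCoinvKer ρ N) →ₗ[ℂ] (W ⧸ grpCoinvKer σ N) :=
  Submodule.mapQ _ _ f (grpCoinvKer_le_comap ρ σ N f hf)

end Grp

/-! ### Tate L-factors of finite-dimensional `T`-modules. -/

section Lfactor

variable {K : Type*} [NontriviallyNormedField K]
variable {X : Type*} [AddCommGroup X] [Module ℂ X]

/-- The part of a `T`-module where the `χ`-twisted action is unramified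
(trivial on the norm-one units). -/
def unrPart (τ : Representation ℂ Kˣ X) (χ : Kˣ →* ℂˣ) : Submodule ℂ X where
  carrier := {x | ∀ u : Kˣ, ‖(u : K)‖ = 1 → (χ u : ℂ) • τ u x = x}
  zero_mem' := fun u _ => by simp
  add_mem' {a b} ha hb := fun u hu => by rw [map_add, smul_add, ha u hu, hb u hu]
  smul_mem' c x hx := fun u hu => by
    rw [map_smul, smul_comm, hx u hu]

lemma unrPart_stable (τ : Representation ℂ Kˣ X) (χ : Kˣ →* ℂˣ) (ϖ : Kˣ) :
    ∀ x ∈ unrPart τ χ, ((χ ϖ : ℂ) • τ ϖ) x ∈ unrPart τ χ := by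
  intro x hx u hu
  have comm : τ u (τ ϖ x) = τ ϖ (τ u x) := by
    rw [← Module.End.mul_apply, ← map_mul, mul_comm, map_mul, Module.End.mul_apply]
  calc (χ u : ℂ) • τ u (((χ ϖ : ℂ) • τ ϖ) x)
      = (χ ϖ : ℂ) • ((χ u : ℂ) • τ u (τ ϖ x)) := by
        rw [LinearMap.smul_apply, map_smul, smul_comm]
    _ = (χ ϖ : ℂ) • τ ϖ ((χ u : ℂ) • τ u x) := by rw [comm, map_smul]
    _ = ((χ ϖ : ℂ) • τ ϖ) x := by rw [hx u hu, LinearMap.smul_apply]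

/-- The twisted uniformizer action on the unramified part. -/
def twistOp (τ : Representation ℂ Kˣ X) (χ : Kˣ →* ℂˣ) (ϖ : Kˣ) :
    ↥(unrPart τ χ) →ₗ[ℂ] ↥(unrPart τ χ) :=
  LinearMap.restrict ((χ ϖ : ℂ) • τ ϖ) (unrPart_stable τ χ ϖ)

/-- The Tate `L`-factor `L(s, χ ⊗ X) = det(1 - q^{-s}·(χ·τ)(ϖ) | X^{unr,χ})⁻¹` of a
(finite-dimensional) `T`-module `X`, relative to a uniformizer `ϖ`. -/
def Lfactor (τ : Representation ℂ Kˣ X) (χ : Kˣ →* ℂˣ) (ϖ : Kˣ) (s : ℂ) : ℂ :=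
  (LinearMap.det (LinearMap.id - (‖(ϖ : K)‖ : ℂ) ^ s • twistOp τ χ ϖ))⁻¹

end Lfactor

/-! ### The concrete `TS`-modules `𝕊`, `C_c^∞(k)`, `C_b^∞(k^×)` and `𝔼[χ]`. -/

section Concrete

open Aff

variable (K : Type*) [NontriviallyNormedField K]

/-- The representation of `TS` on functions on `k^×`:
`(s_b g)(x) = ψ(bx) g(x)`, `(x_λ g)(x) = g(xλ)`. -/
def repCx (ψ : AddChar K ℂ) : Rep K (Kˣ → ℂ) where
  toFun g :=
    { toFun := fun f x => ψ (g.s * (x : K)) * f (x * g.t)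
      map_add' := fun f₁ f₂ => by funext x; simp [mul_add]
      map_smul' := fun c f => by
        funext x
        simp only [Pi.smul_apply, smul_eq_mul, RingHom.id_apply]
        ring }
  map_one' := by
    apply LinearMap.ext; intro f; funext x
    simp
  map_mul' g h := by
    apply LinearMap.ext; intro f; funext x
    show ψ ((g.s + (g.t : K) * h.s) * (x : K)) * f (x * (g.t * h.t))
        = ψ (g.s * (x : K)) * (ψ (h.s * ((x * g.t : Kˣ) : K)) * f (x * g.t * h.t))
    have harg : (g.s + (g.t : K) * h.s) * (x : K)
        = g.s * (x : K) + h.s * ((x * g.t : Kˣ) : K) := by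
      push_cast
      ring
    rw [harg, AddChar.map_add_eq_mul, ← mul_assoc x g.t h.t]
    ring

@[simp] lemma repCx_apply (ψ : AddChar K ℂ) (g : Aff K) (f : Kˣ → ℂ) (x : Kˣ) :
    repCx K ψ g f x = ψ (g.s * (x : K)) * f (x * g.t) := rfl

/-- The `χ`-twisted representation of `TS` on functions on `k`:
`(s_b g)(x) = ψ(bx) g(x)`, `(x_λ g)(x) = χ(λ) g(xλ)`.  (Take `χ = 1` for the
untwisted action on `C_c^∞(k)`; the module `𝔼[χ]` is `C_c^∞(k)` with the twisted action.) -/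
def repCc (ψ : AddChar K ℂ) (χ : Kˣ →* ℂˣ) : Rep K (K → ℂ) where
  toFun g :=
    { toFun := fun f x => (χ g.t : ℂ) * ψ (g.s * x) * f (x * (g.t : K))
      map_add' := fun f₁ f₂ => by funext x; simp [mul_add]
      map_smul' := fun c f => by
        funext x
        simp only [Pi.smul_apply, smul_eq_mul, RingHom.id_apply]
        ring }
  map_one' := by
    apply LinearMap.ext; intro f; funext x
    simp
  map_mul' g h := by
    apply LinearMap.ext; intro f; funext x
    show (χ (g.t * h.t) : ℂ) * ψ ((g.s + (g.t : K) * h.s) * x) * f (x * ((g.t * h.t : Kˣ) : K))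
        = (χ g.t : ℂ) * ψ (g.s * x) * ((χ h.t : ℂ) * ψ (h.s * (x * (g.t : K)))
            * f (x * (g.t : K) * (h.t : K)))
    have harg : (g.s + (g.t : K) * h.s) * x = g.s * x + h.s * (x * (g.t : K)) := by ring
    have harg2 : x * ((g.t * h.t : Kˣ) : K) = x * (g.t : K) * (h.t : K) := by
      push_cast
      ring
    rw [harg, harg2, AddChar.map_add_eq_mul, map_mul]
    push_cast
    ring

@[simp] lemma repCc_apply (ψ : AddChar K ℂ) (χ : Kˣ →* ℂˣ) (g : Aff K) (f : K → ℂ) (x : K) :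
    repCc K ψ χ g f x = (χ g.t : ℂ) * ψ (g.s * x) * f (x * (g.t : K)) := rfl

/-- The one-dimensional `TS`-module `ℂ_χ` on which `S` acts trivially and `x_λ` by `χ(λ)`. -/
def chiRep (χ : Kˣ →* ℂˣ) : Rep K ℂ where
  toFun g := (χ g.t : ℂ) • LinearMap.id
  map_one' := by
    apply LinearMap.ext; intro c
    simp
  map_mul' g h := by
    apply LinearMap.ext; intro c
    simp only [mul_t, map_mul, LinearMap.smul_apply, LinearMap.id_apply, Module.End.mul_apply,
      Units.val_mul, smul_eq_mul]
    ring

/-- `C_c^∞(k)`: locally constant, compactly supported functions on `k`. -/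
def CcK : Submodule ℂ (K → ℂ) where
  carrier := {f | IsLocallyConstant f ∧ HasCompactSupport f}
  zero_mem' := ⟨IsLocallyConstant.const 0, by
    rw [hasCompactSupport_def]
    simp⟩
  add_mem' {a b} ha hb := ⟨ha.1.comp₂ hb.1 (· + ·), ha.2.add hb.2⟩
  smul_mem' c f hf := by
    refine ⟨?_, hf.2.mono (Function.support_const_smul_subset c f)⟩
    exact hf.1.comp (fun z => c * z)

@[simp] lemma mem_CcK (f : K → ℂ) :
    f ∈ CcK K ↔ IsLocallyConstant f ∧ HasCompactSupport f := Iff.rfl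

/-- `𝕊 = C_c^∞(k^×)`: locally constant, compactly supported functions on `k^×`. -/
def SSx : Submodule ℂ (Kˣ → ℂ) where
  carrier := {f | IsLocallyConstant f ∧ HasCompactSupport f}
  zero_mem' := ⟨IsLocallyConstant.const 0, by
    rw [hasCompactSupport_def]
    simp⟩
  add_mem' {a b} ha hb := ⟨ha.1.comp₂ hb.1 (· + ·), ha.2.add hb.2⟩
  smul_mem' c f hf := by
    refine ⟨?_, hf.2.mono (Function.support_const_smul_subset c f)⟩
    exact hf.1.comp (fun z => c * z)

@[simp] lemma mem_SSx (f : Kˣ → ℂ) :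
    f ∈ SSx K ↔ IsLocallyConstant f ∧ HasCompactSupport f := Iff.rfl

/-- `C_b^∞(k^×)`: locally constant functions on `k^×` whose support has compact closure
in `k`. -/
def Cb : Submodule ℂ (Kˣ → ℂ) where
  carrier := {f | IsLocallyConstant f ∧
    IsCompact (closure (((↑) : Kˣ → K) '' Function.support f))}
  zero_mem' := ⟨IsLocallyConstant.const 0, by simp⟩
  add_mem' {a b} ha hb := by
    refine ⟨ha.1.comp₂ hb.1 (· + ·), ?_⟩
    refine IsCompact.of_isClosed_subset (ha.2.union hb.2) isClosed_closure ?_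
    refine closure_minimal ?_ (ha.2.isClosed.union hb.2.isClosed)
    refine (Set.image_mono (Function.support_add _ _)).trans ?_
    rw [Set.image_union]
    exact Set.union_subset_union subset_closure subset_closure
  smul_mem' c f hf := by
    refine ⟨hf.1.comp (fun z => c * z), ?_⟩
    refine IsCompact.of_isClosed_subset hf.2 isClosed_closure ?_
    refine closure_mono ?_
    exact Set.image_mono (Function.support_const_smul_subset c f)

@[simp] lemma mem_Cb (f : Kˣ → ℂ) :
    f ∈ Cb K ↔ IsLocallyConstant f ∧
      IsCompact (closure (((↑) : Kˣ → K) '' Function.support f)) := Iff.rfl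

variable {K}

lemma SSx_invariant (ψ : AddChar K ℂ) (hψlc : IsLocallyConstant (⇑ψ)) :
    GRep.Invariant (repCx K ψ) (SSx K) := by
  rintro g f hf
  rw [mem_SSx] at hf ⊢
  obtain ⟨hlc, hcs⟩ := hf
  have heq : repCx K ψ g f
      = (fun x : Kˣ => ψ (g.s * (x : K))) * (f ∘ (Homeomorph.mulRight g.t)) := rfl
  constructor
  · rw [heq]
    refine IsLocallyConstant.mul ?_ ?_
    · exact hψlc.comp_continuous (continuous_const.mul Units.continuous_val)
    · exact hlc.comp_continuous (Homeomorph.mulRight g.t).continuous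
  · rw [heq]
    exact (hcs.comp_homeomorph (Homeomorph.mulRight g.t)).mul_left

lemma CcK_invariant (ψ : AddChar K ℂ) (hψlc : IsLocallyConstant (⇑ψ)) (χ : Kˣ →* ℂˣ) :
    GRep.Invariant (repCc K ψ χ) (CcK K) := by
  rintro g f hf
  rw [mem_CcK] at hf ⊢
  obtain ⟨hlc, hcs⟩ := hf
  have hne : ((g.t : Kˣ) : K) ≠ 0 := g.t.ne_zero
  have heq : repCc K ψ χ g f
      = (fun x : K => (χ g.t : ℂ) * ψ (g.s * x)) * (f ∘ (Homeomorph.mulRight₀ (g.t : K) hne)) :=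
    rfl
  constructor
  · rw [heq]
    refine IsLocallyConstant.mul ?_ ?_
    · exact ((hψlc.comp_continuous (continuous_const.mul continuous_id)).comp
        (fun z => (χ g.t : ℂ) * z))
    · exact hlc.comp_continuous (Homeomorph.mulRight₀ (g.t : K) hne).continuous
  · rw [heq]
    exact (hcs.comp_homeomorph (Homeomorph.mulRight₀ (g.t : K) hne)).mul_left

/-- The `TS`-module `𝕊 = C_c^∞(k^×)`. -/
def SRep (ψ : AddChar K ℂ) (hψlc : IsLocallyConstant (⇑ψ)) : Rep K ↥(SSx K) :=
  GRep.sub (repCx K ψ) (SSx_invariant ψ hψlc)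

/-- The `TS`-module `𝔼[χ]`, i.e. `C_c^∞(k)` with the `χ`-twisted action. -/
def ERep (ψ : AddChar K ℂ) (hψlc : IsLocallyConstant (⇑ψ)) (χ : Kˣ →* ℂˣ) : Rep K ↥(CcK K) :=
  GRep.sub (repCc K ψ χ) (CcK_invariant ψ hψlc χ)

/-- The `TS`-module `𝕊^s`, a direct sum of `s` copies of `𝕊`. -/
def SRepPow (ψ : AddChar K ℂ) (hψlc : IsLocallyConstant (⇑ψ)) (s : ℕ) :
    Rep K (Fin s → ↥(SSx K)) where
  toFun g := LinearMap.pi fun i => (SRep ψ hψlc g).comp (LinearMap.proj i)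
  map_one' := by
    apply LinearMap.ext; intro v; funext i
    simp
  map_mul' g h := by
    apply LinearMap.ext; intro v; funext i
    simp [map_mul]

/-- The submodule `E` of `C_b^∞(k^×)` consisting of functions which are `χ`-eigenvectors
modulo `𝕊`; the quotient `E/𝕊` is the `χ`-eigenspace of `C_b^∞(k^×)/𝕊`. -/
def quotEigen (ψ : AddChar K ℂ) (χ : Kˣ →* ℂˣ) : Submodule ℂ (Kˣ → ℂ) where
  carrier := {f | f ∈ Cb K ∧ ∀ u : Kˣ, repCx K ψ (Aff.xT u) f - (χ u : ℂ) • f ∈ SSx K}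
  zero_mem' := ⟨(Cb K).zero_mem, fun u => by simpa using (SSx K).zero_mem⟩
  add_mem' {a b} ha hb := by
    refine ⟨(Cb K).add_mem ha.1 hb.1, fun u => ?_⟩
    rw [map_add, smul_add, add_sub_add_comm]
    exact (SSx K).add_mem (ha.2 u) (hb.2 u)
  smul_mem' c f hf := by
    refine ⟨(Cb K).smul_mem c hf.1, fun u => ?_⟩
    rw [map_smul, smul_comm, ← smul_sub]
    exact (SSx K).smul_mem c (hf.2 u)

/-- Evaluation at `0 ∈ k`, realizing the quotient map `𝔼[χ] → ℂ_χ` with kernel `𝕊`. -/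
def ev0 : ↥(CcK K) →ₗ[ℂ] ℂ where
  toFun f := (f : K → ℂ) 0
  map_add' f g := rfl
  map_smul' c f := rfl

end Concrete

/-! ### The diagonal torus in GL(2). -/

section GL2

variable {K : Type*} [Field K]

/-- The diagonal element `diag(a, b)` of `GL(2, K)`. -/
def diagGL (a b : Kˣ) : Matrix.GeneralLinearGroup (Fin 2) K where
  val := Matrix.diagonal ![(a : K), (b : K)]
  inv := Matrix.diagonal ![((a : K))⁻¹, ((b : K))⁻¹]
  val_inv := by
    ext i j
    fin_cases i <;> fin_cases j <;>
      simp [Matrix.mul_apply, Fin.sum_univ_two, Matrix.diagonal, Matrix.one_apply,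
        a.ne_zero, b.ne_zero]
  inv_val := by
    ext i j
    fin_cases i <;> fin_cases j <;>
      simp [Matrix.mul_apply, Fin.sum_univ_two, Matrix.diagonal, Matrix.one_apply,
        a.ne_zero, b.ne_zero]

end GL2

section Statements

open Aff

variable {K : Type*} [NontriviallyNormedField K] [IsUltrametricDist K] [ProperSpace K]

/-!
The coinvariants `π₀(M) = M_S` form a smooth `T`-module of finite length. Since `T` is commutative
and generated by a compact subgroup together with a uniformizer `ϖ`, it acts on `π₀(M)` through a
finitely generated abelian group, so `π₀(M)` is finite-dimensional by the Nullstellensatz. Averaging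
over the compact subgroup then reduces the comparison of `χ`-invariants and `χ`-coinvariants to
the kernel and cokernel of the single endomorphism `χ(ϖ)⁻¹ ϖ - 1`, whence
`dim π₀(M)^{T,χ} ≤ dim π₀(M)_{T,χ} ≤ 1`.

An embedding `f : 𝔼[χ] → M` and a nonzero `v ∈ (M^S)^{T,χ}` contradict this: for `g ∈ 𝔼[χ]` with
`g(0) ≠ 0` the classes of `v` and `f g` in `π₀(M)` are linearly independent `χ`-eigenvectors.
Indeed, some positive power of each element of `S` fixes a given vector, so a vanishing combination
`a [v] + b [f g] = 0` gives an averaging operator `P` in the group algebra of `S` with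
`a v + f (b P g) = 0`. Then `b P g` is `S`-invariant, hence zero, while `(P g)(0) = g(0) ≠ 0`.
-/

section FiniteLength

lemma finite_of_isSimpleModule_of_finiteType (𝕜 B M : Type*) [Field 𝕜] [CommRing B]
    [Algebra 𝕜 B] [Algebra.FiniteType 𝕜 B] [AddCommGroup M] [Module 𝕜 M] [Module B M]
    [IsScalarTower 𝕜 B M] [IsSimpleModule B M] : Module.Finite 𝕜 M := by
  obtain ⟨I, hI, ⟨e⟩⟩ := isSimpleModule_iff_quot_maximal.mp ‹IsSimpleModule B M›
  let := Ideal.Quotient.field I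
  have := finite_of_finite_type_of_isJacobsonRing 𝕜 (B ⧸ I)
  exact Module.Finite.equiv (e.restrictScalars 𝕜).symm

lemma finite_of_isFiniteLength (𝕜 : Type*) {B M : Type*} [Field 𝕜] [CommRing B] [Algebra 𝕜 B]
    [Algebra.FiniteType 𝕜 B] [AddCommGroup M] [Module B M] (h : IsFiniteLength B M)
    [Module 𝕜 M] [IsScalarTower 𝕜 B M] : Module.Finite 𝕜 M := by
  rename_i h𝕜 hB
  revert h𝕜 hB
  induction h with
  | of_subsingleton => intros; infer_instance
  | @of_simple_quotient M _ _ N _ _ ih =>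
    intro _ _
    have : Module.Finite 𝕜 (N.restrictScalars 𝕜) := ih
    have : Module.Finite 𝕜 (M ⧸ N.restrictScalars 𝕜) :=
      finite_of_isSimpleModule_of_finiteType 𝕜 B (M ⧸ N)
    exact .of_submodule_quotient (N.restrictScalars 𝕜)

open Representation MonoidAlgebra

variable {k G Γ V X : Type*} [CommRing k] [Group G] [Group Γ] [AddCommGroup V] [Module k V]
  [AddCommGroup X] [Module k X]

lemma isFiniteLength_asModule_iff (σ : Representation k G V) :
    IsFiniteLength k[G] σ.asModule ↔
      WellFoundedGT (Subrepresentation σ) ∧ WellFoundedLT (Subrepresentation σ) := by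
  rw [isFiniteLength_iff_isNoetherian_isArtinian, isNoetherian_iff']
  let e := Subrepresentation.subrepresentationSubmoduleOrderIso (ρ := σ)
  exact ⟨fun ⟨_, _⟩ ↦ ⟨e.strictMono.wellFoundedGT, e.strictMono.wellFoundedLT⟩,
    fun ⟨_, _⟩ ↦ ⟨e.symm.strictMono.wellFoundedGT, e.symm.strictMono.wellFoundedLT⟩⟩

lemma isFiniteLength_of_surjective {ρ : Representation k G V} {σ : Representation k Γ X}
    (f : V →ₗ[k] X) (hf : Function.Surjective f) (p : G → Γ)
    (hfp : ∀ g v, f (ρ g v) = σ (p g) (f v)) (h : IsFiniteLength k[G] ρ.asModule) :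
    IsFiniteLength k[Γ] σ.asModule := by
  rw [isFiniteLength_asModule_iff] at h ⊢
  obtain ⟨_, _⟩ := h
  let pullback (U : Subrepresentation σ) : Subrepresentation ρ :=
    ⟨U.toSubmodule.comap f, fun g v hv ↦ by
      simpa only [Submodule.mem_comap, hfp] using U.apply_mem_toSubmodule (p g) hv⟩
  have pullback_strictMono : StrictMono pullback := fun _ _ hUW ↦
    Submodule.comap_strictMono_of_surjective hf hUW
  exact ⟨pullback_strictMono.wellFoundedGT, pullback_strictMono.wellFoundedLT⟩

end FiniteLength

section InvariantsCoinvariants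

open Representation MonoidAlgebra

variable {G Γ : Type*}

lemma fg_of_finite_sup_zpowers [Group Γ] {H : Subgroup Γ} [Finite H] {γ : Γ}
    (h : H ⊔ Subgroup.zpowers γ = ⊤) : Group.FG Γ :=
  Group.fg_def.mpr (h ▸ (Group.fg_iff_subgroup_fg H |>.mp inferInstance).sup
    ⟨{γ}, by rw [Finset.coe_singleton, Subgroup.zpowers_eq_closure]⟩)

variable {k X : Type*} [CommRing k] [AddCommGroup X] [Module k X]

lemma invariants_comp_of_surjective [Group G] [Group Γ] {p : G →* Γ} (hp : Function.Surjective p)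
    (σ : Representation k Γ X) : invariants (σ.comp p) = σ.invariants := by
  ext x
  simp only [mem_invariants, MonoidHom.comp_apply, hp.forall]

lemma coinvariantsKer_comp_of_surjective [Group G] [Group Γ] {p : G →* Γ}
    (hp : Function.Surjective p) (σ : Representation k Γ X) :
    Coinvariants.ker (σ.comp p) = Coinvariants.ker σ := by
  refine le_antisymm (Submodule.span_le.mpr ?_) (Submodule.span_le.mpr ?_)
  · rintro _ ⟨⟨g, x⟩, rfl⟩
    exact Coinvariants.sub_mem_ker (p g) x
  · rintro _ ⟨⟨γ, x⟩, rfl⟩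
    obtain ⟨g, rfl⟩ := hp γ
    exact Coinvariants.sub_mem_ker (ρ := σ.comp p) g x

lemma comp_eq_of_forall_mem_of_comp_eq [Group Γ] {H : Subgroup Γ} {γ : Γ}
    (h : H ⊔ Subgroup.zpowers γ = ⊤) (σ : Representation k Γ X) {Z : Type*} [AddCommGroup Z]
    [Module k Z] {L : X →ₗ[k] Z} (hH : ∀ u ∈ H, L ∘ₗ σ u = L) (hγ : L ∘ₗ σ γ = L) (u : Γ) :
    L ∘ₗ σ u = L := by
  let stabilizer : Subgroup Γ :=
    { carrier := {u | L ∘ₗ σ u = L}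
      one_mem' := by simp [Module.End.one_eq_id]
      mul_mem' := fun {u v} (hu : _ = L) (hv : _ = L) ↦ by
        simp only [Set.mem_ofPred_eq, map_mul, Module.End.mul_eq_comp, ← LinearMap.comp_assoc, hu,
          hv]
      inv_mem' := fun {u} (hu : _ = L) ↦ by
        simp only [Set.mem_ofPred_eq]
        nth_rw 1 [← hu]
        rw [LinearMap.comp_assoc, ← Module.End.mul_eq_comp, ← map_mul, mul_inv_cancel, map_one,
          Module.End.one_eq_id, LinearMap.comp_id] }
  have le_stabilizer : ⊤ ≤ stabilizer := h ▸ sup_le hH (Subgroup.zpowers_le.mpr hγ)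
  exact le_stabilizer (Subgroup.mem_top u)

section Average

variable [CommGroup Γ] (σ : Representation k Γ X) (H : Subgroup Γ) [Fintype H]
  [Invertible (Fintype.card H : k)]

/-- The projection of a representation onto the invariants of a finite subgroup `H` given by
averaging over `H`. -/
def averageInvariants : X →ₗ[k] invariants (σ.comp H.subtype) :=
  (averageMap (σ.comp H.subtype)).codRestrict _ (averageMap_invariant _)

lemma averageInvariants_coe (y : invariants (σ.comp H.subtype)) : averageInvariants σ H y = y :=
  Subtype.ext (averageMap_id (σ.comp H.subtype) y y.2)

lemma averageInvariants_surjective : Function.Surjective (averageInvariants σ H) :=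
  fun y ↦ ⟨y, averageInvariants_coe σ H y⟩

lemma coe_averageInvariants_apply (u : Γ) (x : X) :
    (averageInvariants σ H (σ u x) : X) = σ u (averageInvariants σ H x) := by
  simp only [averageInvariants, LinearMap.codRestrict_apply, averageMap, GroupAlgebra.average,
    map_smul, map_sum, of_apply, asAlgebraHom_single_one, LinearMap.smul_apply,
    LinearMap.sum_apply, MonoidHom.comp_apply, ← Module.End.mul_apply, ← map_mul, mul_comm u]

lemma averageInvariants_apply_of_mem {u : Γ} (hu : u ∈ H) (x : X) :
    averageInvariants σ H (σ u x) = averageInvariants σ H x :=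
  Subtype.ext ((coe_averageInvariants_apply σ H u x).trans
    ((averageInvariants σ H x).2 ⟨u, hu⟩))

lemma averageInvariants_apply_averageInvariants (u : Γ) (x : X) :
    averageInvariants σ H (σ u (averageInvariants σ H x)) = averageInvariants σ H (σ u x) := by
  rw [← coe_averageInvariants_apply, averageInvariants_coe]

end Average

variable {𝕜 X : Type*} [Field 𝕜] [AddCommGroup X] [Module 𝕜 X]

lemma finite_of_isFiniteLength_of_finite_sup_zpowers [CommGroup Γ] {H : Subgroup Γ} [Finite H]
    {γ : Γ} (h : H ⊔ Subgroup.zpowers γ = ⊤) {σ : Representation 𝕜 Γ X}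
    (hσ : IsFiniteLength 𝕜[Γ] σ.asModule) : Module.Finite 𝕜 X := by
  have := fg_of_finite_sup_zpowers h
  have := finite_of_isFiniteLength 𝕜 hσ
  exact .equiv σ.asModuleEquiv

/-- Averaging over `H` reduces to the endomorphism `σ γ - 1` of the `H`-invariants, whose kernel
and cokernel have the same dimension. -/
theorem finrank_invariants_le_finrank_coinvariants [CharZero 𝕜] [Module.Finite 𝕜 X] [CommGroup Γ]
    {H : Subgroup Γ} [Finite H] {γ : Γ} (h : H ⊔ Subgroup.zpowers γ = ⊤)
    (σ : Representation 𝕜 Γ X) :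
    Module.finrank 𝕜 (invariants σ) ≤ Module.finrank 𝕜 (X ⧸ Coinvariants.ker σ) := by
  have := Fintype.ofFinite H
  have : Invertible (Fintype.card H : 𝕜) :=
    invertibleOfNonzero (Nat.cast_ne_zero.mpr Fintype.card_ne_zero)
  let Y := invariants (σ.comp H.subtype)
  let e := averageInvariants σ H
  let φ : Y →ₗ[𝕜] Y := e ∘ₗ (σ γ - 1) ∘ₗ Y.subtype
  let L : X →ₗ[𝕜] Y ⧸ LinearMap.range φ := (LinearMap.range φ).mkQ ∘ₗ e
  have L_comp (u : Γ) : L ∘ₗ σ u = L := by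
    refine comp_eq_of_forall_mem_of_comp_eq h σ (fun g hg ↦ ?_) ?_ u
    · ext x
      exact congr((LinearMap.range φ).mkQ $(averageInvariants_apply_of_mem σ H hg x))
    · ext x
      refine (Submodule.Quotient.eq _).mpr ⟨e x, ?_⟩
      simp only [φ, e, Y, LinearMap.comp_apply, LinearMap.sub_apply, map_sub,
        Submodule.subtype_apply, Module.End.one_apply, averageInvariants_coe,
        averageInvariants_apply_averageInvariants]
  have L_surjective : Function.Surjective L :=
    (Submodule.mkQ_surjective _).comp (averageInvariants_surjective σ H)
  have invariants_le : invariants σ ≤ (LinearMap.ker φ).map Y.subtype := by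
    intro x hx
    exact ⟨⟨x, fun g ↦ hx g⟩, by simp [φ, hx γ], rfl⟩
  calc Module.finrank 𝕜 (invariants σ)
    _ ≤ Module.finrank 𝕜 ((LinearMap.ker φ).map Y.subtype) :=
      Submodule.finrank_mono invariants_le
    _ = Module.finrank 𝕜 (LinearMap.ker φ) :=
      (Submodule.equivMapOfInjective _ (Submodule.subtype_injective _) _).finrank_eq.symm
    _ = Module.finrank 𝕜 (Y ⧸ LinearMap.range φ) := by
      have := φ.finrank_range_add_finrank_ker
      have := (LinearMap.range φ).finrank_quotient_add_finrank
      omega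
    _ ≤ Module.finrank 𝕜 (X ⧸ Coinvariants.ker σ) :=
      LinearMap.finrank_le_finrank_of_surjective (f := Coinvariants.lift σ L L_comp)
        (.of_comp (g := Coinvariants.mk σ) L_surjective)

end InvariantsCoinvariants

section SmoothRepresentation

open Representation MonoidAlgebra Topology

variable {T : Type*} [CommGroup T] [TopologicalSpace T] [IsTopologicalGroup T]

lemma isOpen_ker_of_finite_asModule {k X : Type*} [CommRing k] [AddCommGroup X] [Module k X]
    (σ : Representation k T X) [Module.Finite k[T] σ.asModule]
    (hσ : ∀ x, ∀ᶠ u in 𝓝 1, σ u x = x) : IsOpen (σ.ker : Set T) := by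
  obtain ⟨s, hs⟩ := Module.Finite.fg_top (R := k[T]) (M := σ.asModule)
  refine Subgroup.isOpen_of_mem_nhds _ (g := 1) ?_
  filter_upwards [(Filter.eventually_all_finset s).mpr fun x _ ↦ hσ x] with u hu
  have fixes_generators : LinearMap.lsmul k[T] σ.asModule (of k T u) = LinearMap.id :=
    LinearMap.ext_on hs fun x hx ↦ by
      simpa only [LinearMap.lsmul_apply, of_apply, single_smul, one_smul] using! hu x hx
  ext x
  simpa only [LinearMap.lsmul_apply, of_apply, single_smul, one_smul] using!
    congr($fixes_generators (σ.asModuleEquiv.symm x))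

lemma finite_map_mk'_of_isCompact {H N : Subgroup T} (hH : IsCompact (H : Set T))
    (hN : IsOpen (N : Set T)) : Finite (H.map (QuotientGroup.mk' N)) :=
  have := QuotientGroup.discreteTopology hN
  (hH.image continuous_quotient_mk').finite_of_discrete

lemma map_mk'_sup_zpowers_eq_top {G : Type*} [Group G] {H : Subgroup G} {g : G}
    (h : H ⊔ Subgroup.zpowers g = ⊤) (N : Subgroup G) [N.Normal] :
    H.map (QuotientGroup.mk' N) ⊔ Subgroup.zpowers (QuotientGroup.mk' N g) = ⊤ := by
  rw [← MonoidHom.map_zpowers, ← Subgroup.map_sup, h,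
    Subgroup.map_top_of_surjective _ (QuotientGroup.mk'_surjective N)]

instance isTrivial_comp_ker_subtype {k G X : Type*} [CommRing k] [Group G] [AddCommGroup X]
    [Module k X] (σ : Representation k G X) : IsTrivial (σ.comp σ.ker.subtype) := ⟨fun u ↦ u.2⟩

variable {𝕜 X : Type*} [Field 𝕜] [AddCommGroup X] [Module 𝕜 X]

theorem finite_of_isFiniteLength_of_eventually_fix {H : Subgroup T} (hH : IsCompact (H : Set T))
    {ϖ : T} (hϖ : H ⊔ Subgroup.zpowers ϖ = ⊤) {σ : Representation 𝕜 T X}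
    (hσ : ∀ x, ∀ᶠ u in 𝓝 1, σ u x = x) (h : IsFiniteLength 𝕜[T] σ.asModule) :
    Module.Finite 𝕜 X := by
  have := (isFiniteLength_iff_isNoetherian_isArtinian.mp h).1
  have := finite_map_mk'_of_isCompact hH (isOpen_ker_of_finite_asModule σ hσ)
  exact finite_of_isFiniteLength_of_finite_sup_zpowers (map_mk'_sup_zpowers_eq_top hϖ σ.ker)
    (isFiniteLength_of_surjective (σ := ofQuotient σ σ.ker) .id Function.surjective_id (↑)
      (fun _ _ ↦ rfl) h)

theorem finrank_invariants_le_finrank_coinvariants_of_eventually_fix [CharZero 𝕜]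
    [Module.Finite 𝕜 X] {H : Subgroup T} (hH : IsCompact (H : Set T))
    {ϖ : T} (hϖ : H ⊔ Subgroup.zpowers ϖ = ⊤) (σ : Representation 𝕜 T X)
    (hσ : ∀ x, ∀ᶠ u in 𝓝 1, σ u x = x) :
    Module.finrank 𝕜 (invariants σ) ≤ Module.finrank 𝕜 (X ⧸ Coinvariants.ker σ) := by
  have : Module.Finite 𝕜 σ.asModule := ‹Module.Finite 𝕜 X›
  have := Module.Finite.of_restrictScalars_finite 𝕜 𝕜[T] σ.asModule
  have := finite_map_mk'_of_isCompact hH (isOpen_ker_of_finite_asModule σ hσ)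
  have hp := QuotientGroup.mk'_surjective σ.ker
  have σ_eq : (ofQuotient σ σ.ker).comp (QuotientGroup.mk' σ.ker) = σ := rfl
  rw [← σ_eq, invariants_comp_of_surjective hp, coinvariantsKer_comp_of_surjective hp]
  exact finrank_invariants_le_finrank_coinvariants (map_mk'_sup_zpowers_eq_top hϖ σ.ker) _

end SmoothRepresentation

section Augmentation

open Representation MonoidAlgebra

/-- The augmentation of the group algebra, sending every group element to `1`. -/
def augmentation (k G : Type*) [CommRing k] [Group G] : k[G] →ₐ[k] k := lift k k G 1

variable {k G V W : Type*} [CommRing k] [Group G] [AddCommGroup V] [Module k V]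
  [AddCommGroup W] [Module k W]

@[simp]
lemma augmentation_single (g : G) (c : k) : augmentation k G (single g c) = c := by
  simp [augmentation]

lemma map_asAlgebraHom_apply {σ : Representation k G V} {τ : Representation k G W}
    {f : V →ₗ[k] W} (hf : ∀ g v, f (σ g v) = τ g (f v)) (P : k[G]) (v : V) :
    f (σ.asAlgebraHom P v) = τ.asAlgebraHom P (f v) := by
  induction P using MonoidAlgebra.induction_linear with
  | zero => simp
  | add P Q hP hQ => simp only [map_add, LinearMap.add_apply, hP, hQ]
  | single g c => simp only [asAlgebraHom_single, LinearMap.smul_apply, map_smul, hf]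

lemma asAlgebraHom_apply_of_mem_invariants {σ : Representation k G V} {v : V}
    (hv : v ∈ invariants σ) (P : k[G]) : σ.asAlgebraHom P v = augmentation k G P • v := by
  induction P using MonoidAlgebra.induction_linear with
  | zero => simp
  | add P Q hP hQ => simp only [map_add, LinearMap.add_apply, add_smul, hP, hQ]
  | single g c => rw [asAlgebraHom_single, LinearMap.smul_apply, hv g, augmentation_single]

lemma mem_coinvariantsKer_of_asAlgebraHom_apply_eq_zero {σ : Representation k G V} {P : k[G]}
    (hP : augmentation k G P = 1) {v : V} (hPv : σ.asAlgebraHom P v = 0) :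
    v ∈ Coinvariants.ker σ := by
  have mk_apply (g : G) (v : V) :
      Coinvariants.mk σ (σ g v) = trivial k G _ g (Coinvariants.mk σ v) :=
    Coinvariants.mk_self_apply σ g v
  rw [← Coinvariants.mk_eq_zero, ← one_smul k (Coinvariants.mk σ v), ← hP,
    ← asAlgebraHom_apply_of_mem_invariants (σ := trivial k G _) (fun _ ↦ rfl),
    ← map_asAlgebraHom_apply mk_apply, hPv, map_zero]

/-- The average over `⟨g⟩` kills `σ g v - v`, and products of such averages kill sums of such
vectors. -/
lemma exists_asAlgebraHom_apply_eq_zero_of_mem_coinvariantsKer {𝕜 G V : Type*} [Field 𝕜]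
    [CharZero 𝕜] [CommGroup G] [AddCommGroup V] [Module 𝕜 V] {σ : Representation 𝕜 G V}
    (hσ : ∀ g v, ∃ n ≠ 0, σ (g ^ n) v = v) {v : V} (hv : v ∈ Coinvariants.ker σ) :
    ∃ P : 𝕜[G], augmentation 𝕜 G P = 1 ∧ σ.asAlgebraHom P v = 0 := by
  induction hv using Submodule.span_induction with
  | mem v hv =>
    obtain ⟨⟨g, v⟩, rfl⟩ := hv
    obtain ⟨n, hn, hgv⟩ := hσ g v
    have hn' : (n : 𝕜) ≠ 0 := Nat.cast_ne_zero.mpr hn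
    refine ⟨∑ j ∈ Finset.range n, single (g ^ j) (n : 𝕜)⁻¹, by simp [hn'], ?_⟩
    have telescope : ∑ j ∈ Finset.range n, σ (g ^ j) (σ g v - v) = 0 := by
      simp_rw [map_sub, ← Module.End.mul_apply, ← map_mul, ← pow_succ]
      rw [Finset.sum_range_sub (fun j ↦ σ (g ^ j) v), hgv, pow_zero, map_one, Module.End.one_apply,
        sub_self]
    simp only [map_sum, asAlgebraHom_single, LinearMap.sum_apply, LinearMap.smul_apply,
      ← Finset.smul_sum, telescope, smul_zero]
  | zero => exact ⟨1, map_one _, map_zero _⟩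
  | add v w _ _ hv hw =>
    obtain ⟨P, hP, hPv⟩ := hv
    obtain ⟨Q, hQ, hQw⟩ := hw
    refine ⟨P * Q, by rw [map_mul, hP, hQ, one_mul], ?_⟩
    rw [map_add, mul_comm, map_mul, Module.End.mul_apply, hPv, ← map_mul, mul_comm, map_mul,
      Module.End.mul_apply, hQw, map_zero, map_zero, add_zero]
  | smul c v _ hv =>
    obtain ⟨P, hP, hPv⟩ := hv
    exact ⟨P, hP, by rw [map_smul, hPv, smul_zero]⟩

end Augmentation

section LocalField

open Topology

lemma exists_nsmul_mem_of_mem_nhds_zero {E : Type*} [SeminormedAddCommGroup E]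
    [IsUltrametricDist E] [ProperSpace E] (b : E) {O : Set E} (hO : O ∈ 𝓝 0) :
    ∃ n ≠ 0, n • b ∈ O := by
  let B : AddSubgroup E :=
    (IsUltrametricDist.closedBall_openAddSubgroup E (r := ‖b‖ + 1) (by positivity)).toAddSubgroup
  have : CompactSpace B := isCompact_iff_compactSpace.mp (isCompact_closedBall 0 (‖b‖ + 1))
  have b_mem : b ∈ B := mem_closedBall_zero_iff.mpr (by simp)
  have clusterPt := mapClusterPt_zero_atTop_nsmul (⟨b, b_mem⟩ : B)
  have frequently_mem := clusterPt.frequently (continuous_subtype_val.continuousAt hO)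
  obtain ⟨n, hnO, hn⟩ := (frequently_mem.and_eventually (Filter.eventually_ne_atTop 0)).exists
  exact ⟨n, hn, hnO⟩

variable {F : Type*}

variable (F) in
/-- The group of units of norm one, the maximal compact subgroup of the multiplicative group of a
nonarchimedean local field. -/
def normOneUnits [NormedField F] : Subgroup Fˣ :=
  ((normHom : F →*₀ ℝ).toMonoidHom.comp (Units.coeHom F)).ker

lemma mem_normOneUnits [NormedField F] {u : Fˣ} : u ∈ normOneUnits F ↔ ‖(u : F)‖ = 1 := Iff.rfl

lemma isCompact_normOneUnits [NormedField F] [ProperSpace F] :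
    IsCompact (normOneUnits F : Set Fˣ) := by
  have ball_compact : IsCompact (Metric.closedBall (0 : F) 1) := isCompact_closedBall 0 1
  refine ((Units.isClosedEmbedding_embedProduct (α := F)).isCompact_preimage
    (ball_compact.prod
      (MulOpposite.opHomeomorph.symm.isCompact_preimage.mpr ball_compact))).of_isClosed_subset ?_ ?_
  · exact isClosed_eq (continuous_norm.comp Units.continuous_val) continuous_const
  · intro u hu
    rw [SetLike.mem_coe, mem_normOneUnits] at hu
    simp [hu]

open scoped Valued NormedField in
lemma exists_normOneUnits_sup_zpowers_eq_top [NontriviallyNormedField F] [IsUltrametricDist F]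
    [ProperSpace F] : ∃ ϖ : Fˣ, normOneUnits F ⊔ Subgroup.zpowers ϖ = ⊤ := by
  have rankOne : (Valued.v : Valuation F NNReal).RankOne :=
    inferInstanceAs (NormedField.valuation (K := F)).RankOne
  have : CompactSpace 𝒪[F] := isCompact_iff_compactSpace.mp <| by
    convert isCompact_closedBall (0 : F) 1
    ext x
    exact Valued.integer.mem_iff.trans mem_closedBall_zero_iff.symm
  have : IsDiscreteValuationRing 𝒪[F] := Valued.integer.isDiscreteValuationRing_of_compactSpace
  obtain ⟨ϖ, hϖ⟩ := IsDiscreteValuationRing.exists_irreducible 𝒪[F]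
  have ϖ_ne_zero : (ϖ : F) ≠ 0 := by simpa using hϖ.ne_zero
  refine ⟨Units.mk0 (ϖ : F) ϖ_ne_zero, eq_top_iff.mpr fun x _ ↦ ?_⟩
  obtain ⟨n, u, hx⟩ := IsDiscreteValuationRing.exists_units_eq_smul_zpow_of_irreducible hϖ x.ne_zero
  have x_eq : x = Units.map (algebraMap 𝒪[F] F) u * Units.mk0 (ϖ : F) ϖ_ne_zero ^ n := by
    ext
    simpa [Algebra.smul_def, Units.smul_def] using! hx
  rw [x_eq]
  exact Subgroup.mul_mem_sup (mem_normOneUnits.mpr (Valued.integer.norm_coe_unit u))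
    (Subgroup.zpow_mem_zpowers _ n)

end LocalField

section Twist

open Representation MonoidAlgebra Topology

variable {F : Type*} [Field F]

lemma CompSeries.isFiniteLength_asModule {V : Type*} [AddCommGroup V] [Module ℂ V] {ρ : Rep F V}
    (c : CompSeries ρ) : IsFiniteLength ℂ[Aff F] ρ.asModule := by
  let U (i : ℕ) : Subrepresentation ρ := ⟨c.W i, fun g v ↦ c.inv i g v⟩
  have U_covBy {i : ℕ} (hi : i < c.n) : U i ⋖ U (i + 1) :=
    ⟨c.lt i hi, fun C hlt hlt' ↦ by
      obtain h | h := c.maximal i hi C.toSubmodule (fun g v ↦ C.apply_mem_toSubmodule g (v := v))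
        hlt.le hlt'.le
      · exact hlt.ne (Subrepresentation.toSubmodule_injective h.symm)
      · exact hlt'.ne (Subrepresentation.toSubmodule_injective h)⟩
  let e := Subrepresentation.subrepresentationSubmoduleOrderIso (ρ := ρ)
  let s : CompositionSeries (Submodule ℂ[Aff F] ρ.asModule) :=
    ⟨c.n, fun i ↦ e (U i), fun i ↦ (apply_covBy_apply_iff e).mpr (U_covBy i.2)⟩
  have U_zero : U 0 = ⊥ := Subrepresentation.toSubmodule_injective c.bot
  have U_n : U c.n = ⊤ := Subrepresentation.toSubmodule_injective c.top
  refine isFiniteLength_iff_exists_compositionSeries.mpr ⟨s, ?_, ?_⟩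
  · exact congr(e $U_zero).trans (map_bot e)
  · exact congr(e $U_n).trans (map_top e)

/-- The tensor product of a representation `σ` with a character `χ`; its invariants and
coinvariants are the `χ⁻¹`-eigenspace and the `χ⁻¹`-coinvariants of `σ`. -/
def twist {k G X : Type*} [CommRing k] [Group G] [AddCommGroup X] [Module k X]
    (χ : G →* kˣ) (σ : Representation k G X) : Representation k G X where
  toFun u := χ u • σ u
  map_one' := by simp
  map_mul' u v := by simp [smul_mul_smul_comm]

lemma invariants_twist_inv {X : Type*} [AddCommGroup X] [Module ℂ X]
    (σ : Representation ℂ Fˣ X) (χ : Fˣ →* ℂˣ) :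
    invariants (twist χ⁻¹ σ) = tEigenT σ χ := by
  ext x
  simp only [mem_invariants, mem_tEigenT]
  exact forall_congr' fun u ↦ inv_smul_eq_iff (g := χ u)

lemma coinvariantsKer_twist_inv {X : Type*} [AddCommGroup X] [Module ℂ X]
    (σ : Representation ℂ Fˣ X) (χ : Fˣ →* ℂˣ) :
    Coinvariants.ker (twist χ⁻¹ σ) = tTwistKerT σ χ := by
  have smul_sub_eq (u : Fˣ) (x : X) :
      (χ u : ℂ) • (twist χ⁻¹ σ u x - x) = σ u x - (χ u : ℂ) • x := by
    rw [smul_sub]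
    exact congr($(smul_inv_smul (χ u) (σ u x)) - _)
  refine le_antisymm (Submodule.span_le.mpr ?_) (Submodule.span_le.mpr ?_)
  · rintro _ ⟨⟨u, x⟩, rfl⟩
    exact (Submodule.smul_mem_iff _ (χ u).ne_zero).mp
      (Submodule.subset_span ⟨u, x, smul_sub_eq u x⟩)
  · rintro _ ⟨u, x, rfl⟩
    exact smul_sub_eq u x ▸ Submodule.smul_mem _ _ (Coinvariants.sub_mem_ker u x)

variable [TopologicalSpace F]

lemma IsSmoothRep.eventually_xT_apply_eq {V : Type*} [AddCommGroup V] [Module ℂ V] {ρ : Rep F V}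
    (hρ : IsSmoothRep ρ) (v : V) : ∀ᶠ u in 𝓝 1, ρ (xT u) v = v := by
  have continuous_xT : Continuous (xT : Fˣ → Aff F) :=
    continuous_induced_rng.mpr (continuous_id.prodMk continuous_const)
  refine ((hρ v).preimage continuous_xT).mem_nhds ?_
  exact congr($(map_one ρ) v)

lemma IsSmoothRep.eventually_sS_apply_eq {V : Type*} [AddCommGroup V] [Module ℂ V] {ρ : Rep F V}
    (hρ : IsSmoothRep ρ) (v : V) : ∀ᶠ b in 𝓝 0, ρ (sS b) v = v := by
  have continuous_sS : Continuous (sS : F → Aff F) :=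
    continuous_induced_rng.mpr (continuous_const.prodMk continuous_id)
  refine ((hρ v).preimage continuous_sS).mem_nhds ?_
  exact congr($(map_one ρ) v)

lemma IsSmoothRep.eventually_piZeroT_apply_eq {V : Type*} [AddCommGroup V] [Module ℂ V]
    {ρ : Rep F V} (hρ : IsSmoothRep ρ) (x : V ⧸ sCoinvKer ρ) :
    ∀ᶠ u in 𝓝 1, piZeroT ρ u x = x := by
  obtain ⟨v, rfl⟩ := Submodule.mkQ_surjective _ x
  filter_upwards [hρ.eventually_xT_apply_eq v] with u hu
  exact congr((sCoinvKer ρ).mkQ $hu)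

lemma IsSmoothRep.eventually_eq_one_of_mem_tEigen {V : Type*} [AddCommGroup V] [Module ℂ V]
    {ρ : Rep F V} (hρ : IsSmoothRep ρ) {χ : Fˣ →* ℂˣ} {v : V} (hv : v ∈ tEigen ρ χ)
    (hv0 : v ≠ 0) : ∀ᶠ u in 𝓝 1, χ u = 1 := by
  filter_upwards [hρ.eventually_xT_apply_eq v] with u hu
  have : (χ u : ℂ) • v = (1 : ℂ) • v := (hv u).symm.trans (hu.trans (one_smul ℂ v).symm)
  exact Units.ext (smul_left_injective ℂ hv0 this)

lemma finrank_tEigenT_le_finrank_quotient_tTwistKerT [ContinuousMul F] {X : Type*}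
    [AddCommGroup X] [Module ℂ X] [Module.Finite ℂ X] {H : Subgroup Fˣ}
    (hH : IsCompact (H : Set Fˣ)) {ϖ : Fˣ} (hϖ : H ⊔ Subgroup.zpowers ϖ = ⊤)
    {σ : Representation ℂ Fˣ X} (hσ : ∀ x, ∀ᶠ u in 𝓝 1, σ u x = x) {χ : Fˣ →* ℂˣ}
    (hχ : ∀ᶠ u in 𝓝 1, χ u = 1) :
    Module.finrank ℂ (tEigenT σ χ) ≤ Module.finrank ℂ (X ⧸ tTwistKerT σ χ) := by
  rw [← invariants_twist_inv, ← coinvariantsKer_twist_inv]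
  refine finrank_invariants_le_finrank_coinvariants_of_eventually_fix hH hϖ _ fun x ↦ ?_
  filter_upwards [hσ x, hχ] with u hu hχu
  change (χ u)⁻¹ • σ u x = x
  rw [hu, hχu, inv_one, one_smul]

end Twist

section PiZero

variable {F V : Type*} [Field F] [AddCommGroup V] [Module ℂ V]

lemma mkQ_mem_tEigenT_piZeroT {ρ : Rep F V} {χ : Fˣ →* ℂˣ} {v : V}
    (hv : v ∈ tEigen ρ χ) :
    (sCoinvKer ρ).mkQ v ∈ tEigenT (piZeroT ρ) χ :=
  fun u ↦ congr((sCoinvKer ρ).mkQ $(hv u)).trans (map_smul _ _ _)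

lemma mkQ_sS_apply (ρ : Rep F V) (b : F) (v : V) :
    (sCoinvKer ρ).mkQ (ρ (sS b) v) = (sCoinvKer ρ).mkQ v :=
  (Submodule.Quotient.eq _).mpr (Submodule.subset_span ⟨b, v, rfl⟩)

lemma mkQ_apply_eq_piZeroT (ρ : Rep F V) (g : Aff F) (v : V) :
    (sCoinvKer ρ).mkQ (ρ g v) = piZeroT ρ g.t ((sCoinvKer ρ).mkQ v) := by
  conv_lhs => rw [aff_decomp g, map_mul, Module.End.mul_apply]
  exact congr(piZeroT ρ g.t $(mkQ_sS_apply ρ _ v))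

theorem finite_piZero [TopologicalSpace F] [ContinuousMul F] {H : Subgroup Fˣ}
    (hH : IsCompact (H : Set Fˣ)) {ϖ : Fˣ} (hϖ : H ⊔ Subgroup.zpowers ϖ = ⊤) {ρ : Rep F V}
    (hρ : IsSmoothRep ρ) (c : CompSeries ρ) : Module.Finite ℂ (V ⧸ sCoinvKer ρ) :=
  finite_of_isFiniteLength_of_eventually_fix hH hϖ hρ.eventually_piZeroT_apply_eq
    (isFiniteLength_of_surjective _ (Submodule.mkQ_surjective _) Aff.t (mkQ_apply_eq_piZeroT ρ)
      c.isFiniteLength_asModule)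

lemma two_le_finrank_of_linearIndependent_pair {𝕜 X : Type*} [Field 𝕜] [AddCommGroup X]
    [Module 𝕜 X] [Module.Finite 𝕜 X] {Y : Submodule 𝕜 X} {x y : X} (hx : x ∈ Y) (hy : y ∈ Y)
    (h : LinearIndependent 𝕜 ![x, y]) : 2 ≤ Module.finrank 𝕜 Y := by
  have : LinearIndependent 𝕜 ![(⟨x, hx⟩ : Y), ⟨y, hy⟩] := .of_comp Y.subtype <| by
    convert h
    ext i
    fin_cases i <;> rfl
  exact this.fintype_card_le_finrank

end PiZero

section SAction

open Representation MonoidAlgebra Topology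

/-- The embedding of the additive group of the field as the subgroup `S` of the affine group. -/
def sSHom {F : Type*} [Field F] : Multiplicative F →* Aff F where
  toFun b := sS b.toAdd
  map_one' := rfl
  map_mul' a b := by ext <;> simp [sS]

lemma coinvariantsKer_comp_sSHom {F V : Type*} [Field F] [AddCommGroup V] [Module ℂ V]
    (ρ : Rep F V) : Coinvariants.ker (ρ.comp sSHom) = sCoinvKer ρ := by
  refine congrArg (Submodule.span ℂ) (Set.ext fun w ↦ Prod.exists.trans ?_)
  exact exists₂_congr fun _ _ ↦ eq_comm

lemma IsSmoothRep.exists_sSHom_pow_apply_eq {F V : Type*} [NormedField F] [IsUltrametricDist F]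
    [ProperSpace F] [AddCommGroup V] [Module ℂ V] {ρ : Rep F V} (hρ : IsSmoothRep ρ)
    (b : Multiplicative F) (v : V) : ∃ n ≠ 0, ρ (sSHom (b ^ n)) v = v :=
  exists_nsmul_mem_of_mem_nhds_zero b.toAdd (hρ.eventually_sS_apply_eq v)

lemma IsSmoothRep.exists_asAlgebraHom_apply_eq_zero_of_mem_sCoinvKer {F V : Type*} [NormedField F]
    [IsUltrametricDist F] [ProperSpace F] [AddCommGroup V] [Module ℂ V] {ρ : Rep F V}
    (hρ : IsSmoothRep ρ) {v : V} (hv : v ∈ sCoinvKer ρ) :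
    ∃ P, augmentation ℂ (Multiplicative F) P = 1 ∧ asAlgebraHom (ρ.comp sSHom) P v = 0 :=
  exists_asAlgebraHom_apply_eq_zero_of_mem_coinvariantsKer hρ.exists_sSHom_pow_apply_eq
    (coinvariantsKer_comp_sSHom ρ ▸ hv)

/-- The Fourier transform of a finitely supported measure on `F`, through which the group algebra
of `S` acts on functions by multiplication. -/
def fourier {F : Type*} [Field F] (ψ : AddChar F ℂ) :
    ℂ[Multiplicative F] →ₐ[ℂ] (F → ℂ) :=
  lift ℂ (F → ℂ) (Multiplicative F)
    { toFun b x := ψ (b.toAdd * x)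
      map_one' := by ext x; simp
      map_mul' a b := by ext x; simp [add_mul, AddChar.map_add_eq_mul] }

section Fourier

variable {F : Type*} [Field F] (ψ : AddChar F ℂ)

@[simp]
lemma fourier_single (b : Multiplicative F) (c : ℂ) (x : F) :
    fourier ψ (single b c) x = c * ψ (b.toAdd * x) := by
  simp [fourier]

lemma fourier_apply_zero (P : ℂ[Multiplicative F]) :
    fourier ψ P 0 = augmentation ℂ (Multiplicative F) P := by
  induction P using MonoidAlgebra.induction_linear with
  | zero => simp
  | add P Q hP hQ => simp only [map_add, Pi.add_apply, hP, hQ]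
  | single b c => simp

end Fourier

variable {F : Type*} [NontriviallyNormedField F] {ψ : AddChar F ℂ}

lemma ERep_sSHom_apply (hψ : IsLocallyConstant ψ) (χ : Fˣ →* ℂˣ) (b : Multiplicative F)
    (h : CcK F) (x : F) :
    (ERep ψ hψ χ (sSHom b) h : F → ℂ) x = ψ (b.toAdd * x) * (h : F → ℂ) x := by
  simp [ERep, GRep.sub, sSHom, sS]

lemma asAlgebraHom_ERep_apply (hψ : IsLocallyConstant ψ) (χ : Fˣ →* ℂˣ)
    (P : ℂ[Multiplicative F]) (h : CcK F) :
    (asAlgebraHom ((ERep ψ hψ χ).comp sSHom) P h : F → ℂ) = fourier ψ P * h := by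
  induction P using MonoidAlgebra.induction_linear with
  | zero => simp
  | add P Q hP hQ =>
    rw [map_add, LinearMap.add_apply, Submodule.coe_add, hP, hQ, map_add, add_mul]
  | single b c =>
    ext x
    rw [asAlgebraHom_single, LinearMap.smul_apply, MonoidHom.comp_apply, Submodule.coe_smul,
      Pi.smul_apply, ERep_sSHom_apply, smul_eq_mul, Pi.mul_apply, fourier_single, mul_assoc]

lemma exists_map_mul_ne_one {F : Type*} [Field F] {ψ : AddChar F ℂ} (hψ1 : ψ ≠ 1) {x : F}
    (hx : x ≠ 0) : ∃ b, ψ (b * x) ≠ 1 := by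
  obtain ⟨a, ha⟩ := AddChar.ne_one_iff.mp hψ1
  exact ⟨a / x, by rwa [div_mul_cancel₀ a hx]⟩

lemma exists_augmentation_eq_one_fourier_eqOn_zero (hψ : IsLocallyConstant ψ) (hψ1 : ψ ≠ 1)
    {C : Set F} (hC : IsCompact C) (hC0 : 0 ∉ C) :
    ∃ P, augmentation ℂ (Multiplicative F) P = 1 ∧ Set.EqOn (fourier ψ P) 0 C := by
  refine hC.induction_on (p := fun s ↦ ∃ P, augmentation ℂ (Multiplicative F) P = 1 ∧
    Set.EqOn (fourier ψ P) 0 s) ⟨1, map_one _, Set.eqOn_empty _ _⟩ ?_ ?_ ?_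
  · rintro s t hst ⟨P, hP, hPt⟩
    exact ⟨P, hP, hPt.mono hst⟩
  · rintro s t ⟨P, hP, hPs⟩ ⟨Q, hQ, hQt⟩
    refine ⟨P * Q, by rw [map_mul, hP, hQ, one_mul], ?_⟩
    rintro x (hx | hx)
    · simp [hPs hx]
    · simp [hQt hx]
  · intro x hx
    obtain ⟨b, hb⟩ := exists_map_mul_ne_one hψ1 (ne_of_mem_of_not_mem hx hC0)
    have : 1 - ψ (b * x) ≠ 0 := sub_ne_zero.mpr hb.symm
    have eventually_eq : ∀ᶠ y in 𝓝 x, ψ (b * y) = ψ (b * x) :=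
      (hψ.comp_continuous (continuous_const_mul b)).eventually_eq x
    refine ⟨_, mem_nhdsWithin_of_mem_nhds eventually_eq,
      (1 - ψ (b * x))⁻¹ • (single (.ofAdd b) 1 - single 1 (ψ (b * x))), ?_, fun y hy ↦ ?_⟩
    · simp [this]
    · simp [show ψ (b * y) = ψ (b * x) from hy]

lemma mem_sCoinvKer_ERep_of_ev0_eq_zero (hψ : IsLocallyConstant ψ) (hψ1 : ψ ≠ 1) (χ : Fˣ →* ℂˣ)
    {h : CcK F} (hh : ev0 h = 0) : h ∈ sCoinvKer (ERep ψ hψ χ) := by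
  have zero_notMem : 0 ∉ tsupport (h : F → ℂ) := by
    rw [notMem_tsupport_iff_eventuallyEq]
    exact (h.2.1.eventually_eq 0).mono fun y hy ↦ hy.trans hh
  obtain ⟨P, hP, hPh⟩ := exists_augmentation_eq_one_fourier_eqOn_zero hψ hψ1 h.2.2 zero_notMem
  rw [← coinvariantsKer_comp_sSHom]
  refine mem_coinvariantsKer_of_asAlgebraHom_apply_eq_zero hP (Subtype.ext ?_)
  rw [asAlgebraHom_ERep_apply]
  ext x
  by_cases hx : x ∈ tsupport (h : F → ℂ)
  · simp [hPh hx]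
  · simp [image_eq_zero_of_notMem_tsupport hx]

lemma sInv_ERep_eq_bot (hψ : IsLocallyConstant ψ) (hψ1 : ψ ≠ 1) (χ : Fˣ →* ℂˣ) :
    sInv (ERep ψ hψ χ) = ⊥ := by
  refine (Submodule.eq_bot_iff _).mpr fun h hh ↦ Subtype.ext ?_
  have apply_eq_zero {x : F} (hx : x ≠ 0) : (h : F → ℂ) x = 0 := by
    obtain ⟨b, hb⟩ := exists_map_mul_ne_one hψ1 hx
    have ψ_mul_apply : ψ (b * x) * (h : F → ℂ) x = (h : F → ℂ) x :=
      (ERep_sSHom_apply hψ χ (.ofAdd b) h x).symm.trans congr(($(hh b) : F → ℂ) x)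
    by_contra hx'
    exact hb ((mul_eq_right₀ hx').mp ψ_mul_apply)
  have eventually_eq : ∀ᶠ y in 𝓝[≠] 0, (h : F → ℂ) y = (h : F → ℂ) 0 :=
    (h.2.1.eventually_eq 0).filter_mono nhdsWithin_le_nhds
  obtain ⟨y, hy, hy0⟩ := (eventually_eq.and self_mem_nhdsWithin).exists
  ext x
  obtain rfl | hx := eq_or_ne x 0
  · exact hy.symm.trans (apply_eq_zero hy0)
  · exact apply_eq_zero hx

lemma exists_ev0_ne_zero [IsUltrametricDist F] [ProperSpace F] : ∃ g : CcK F, ev0 g ≠ 0 := by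
  have isClopen := IsUltrametricDist.isClopen_closedBall (0 : F) one_ne_zero
  refine ⟨⟨LocallyConstant.charFn ℂ isClopen, LocallyConstant.isLocallyConstant _,
    .intro (isCompact_closedBall 0 1) fun x hx ↦ ?_⟩, ?_⟩
  · rw [LocallyConstant.coe_charFn, Set.indicator_of_notMem hx]
  · change LocallyConstant.charFn ℂ isClopen 0 ≠ 0
    rw [LocallyConstant.coe_charFn, Set.indicator_of_mem (by simp)]
    exact one_ne_zero

variable {V : Type*} [AddCommGroup V] [Module ℂ V] {ρ : Rep F V} {χ : Fˣ →* ℂˣ}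

lemma mkQ_map_mem_tEigenT_piZeroT {hψ : IsLocallyConstant ψ} (hψ1 : ψ ≠ 1) {f : CcK F →ₗ[ℂ] V}
    (hf : GRep.Equivariant (ERep ψ hψ χ) ρ f) (g : CcK F) :
    (sCoinvKer ρ).mkQ (f g) ∈ tEigenT (piZeroT ρ) χ := by
  intro u
  have ev0_sub : ev0 (ERep ψ hψ χ (xT u) g - (χ u : ℂ) • g) = 0 := by
    simp [ev0, ERep, GRep.sub, xT]
  have mem_sCoinvKer : f (ERep ψ hψ χ (xT u) g - (χ u : ℂ) • g) ∈ sCoinvKer ρ :=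
    sCoinvKer_le_comap _ ρ f hf (mem_sCoinvKer_ERep_of_ev0_eq_zero hψ hψ1 χ ev0_sub)
  rw [map_sub, map_smul, hf] at mem_sCoinvKer
  exact (Submodule.Quotient.eq _).mpr mem_sCoinvKer

lemma linearIndependent_mkQ_pair [IsUltrametricDist F] [ProperSpace F] (hρ : IsSmoothRep ρ)
    {hψ : IsLocallyConstant ψ} (hψ1 : ψ ≠ 1) {f : CcK F →ₗ[ℂ] V} (hf_inj : Function.Injective f)
    (hf : GRep.Equivariant (ERep ψ hψ χ) ρ f) {v : V} (hv : v ∈ sInv ρ) (hv0 : v ≠ 0)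
    {g : CcK F} (hg : ev0 g ≠ 0) :
    LinearIndependent ℂ ![(sCoinvKer ρ).mkQ v, (sCoinvKer ρ).mkQ (f g)] := by
  refine LinearIndependent.pair_iff.mpr fun a b hab ↦ ?_
  rw [← map_smul, ← map_smul, ← map_add, Submodule.mkQ_apply, Submodule.Quotient.mk_eq_zero] at hab
  obtain ⟨P, hP, hPv⟩ := hρ.exists_asAlgebraHom_apply_eq_zero_of_mem_sCoinvKer hab
  let Pg := asAlgebraHom ((ERep ψ hψ χ).comp sSHom) P g
  have a_smul_v : a • v + f (b • Pg) = 0 := by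
    rw [map_add, map_smul, asAlgebraHom_apply_of_mem_invariants (σ := ρ.comp sSHom)
        (fun c ↦ hv c.toAdd), hP, one_smul, map_smul,
      ← map_asAlgebraHom_apply (σ := (ERep ψ hψ χ).comp sSHom)
        (fun c ↦ hf (sSHom c))] at hPv
    rw [map_smul, hPv]
  have Pg_mem : b • Pg ∈ sInv (ERep ψ hψ χ) := fun c ↦ hf_inj <| by
    rw [hf, eq_neg_of_add_eq_zero_right a_smul_v, map_neg, map_smul, hv c]
  rw [sInv_ERep_eq_bot hψ hψ1, Submodule.mem_bot] at Pg_mem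
  have ev0_Pg : ev0 Pg = ev0 g := by
    change (Pg : F → ℂ) 0 = (g : F → ℂ) 0
    rw [asAlgebraHom_ERep_apply, Pi.mul_apply, fourier_apply_zero, hP, one_mul]
  refine ⟨?_, ?_⟩
  · rw [Pg_mem, map_zero, add_zero] at a_smul_v
    exact (smul_eq_zero.mp a_smul_v).resolve_right hv0
  · have : b * ev0 g = 0 := by rw [← ev0_Pg, ← smul_eq_mul, ← map_smul, Pg_mem, map_zero]
    exact (mul_eq_zero.mp this).resolve_right hg

end SAction

theorem statement14_general
    (ψ : AddChar K ℂ) (hψlc : IsLocallyConstant (⇑ψ)) (hψne : ψ ≠ 1)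
    {V : Type*} [AddCommGroup V] [Module ℂ V]
    (ρ : Rep K V) (hρ : IsSmoothRep ρ) (c : CompSeries ρ)
    (χ : Kˣ →* ℂˣ)
    (h1 : Module.finrank ℂ
      ((V ⧸ sCoinvKer ρ) ⧸ tTwistKerT (piZeroT ρ) χ) ≤ 1)
    (h2 : sInv ρ ⊓ tEigen ρ χ ≠ ⊥) :
    ¬ ∃ f : ↥(CcK K) →ₗ[ℂ] V, Function.Injective f ∧
        GRep.Equivariant (ERep ψ hψlc χ) ρ f := by
  rintro ⟨f, hf_inj, hf⟩
  obtain ⟨v, ⟨hvS, hvT⟩, hv0⟩ := Submodule.exists_mem_ne_zero_of_ne_bot h2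
  obtain ⟨g, hg⟩ := exists_ev0_ne_zero (F := K)
  obtain ⟨ϖ, hϖ⟩ := exists_normOneUnits_sup_zpowers_eq_top (F := K)
  have := finite_piZero isCompact_normOneUnits hϖ hρ c
  have two_le : 2 ≤ Module.finrank ℂ (tEigenT (piZeroT ρ) χ) :=
    two_le_finrank_of_linearIndependent_pair (mkQ_mem_tEigenT_piZeroT hvT)
      (mkQ_map_mem_tEigenT_piZeroT hψne hf g)
      (linearIndependent_mkQ_pair hρ hψne hf_inj hf hvS hv0 hg)
  have finrank_le := finrank_tEigenT_le_finrank_quotient_tTwistKerT isCompact_normOneUnits hϖ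
    hρ.eventually_piZeroT_apply_eq (hρ.eventually_eq_one_of_mem_tEigen hvT hv0)
  omega

theorem statement14
    (hchar : (2 : K) ≠ 0)
    (ψ : AddChar K ℂ) (hψlc : IsLocallyConstant (⇑ψ)) (hψne : ψ ≠ 1)
    {V : Type*} [AddCommGroup V] [Module ℂ V]
    (ρ : Rep K V) (hρ : IsSmoothRep ρ) (c : CompSeries ρ)
    (hdeg : c.deg (SRep ψ hψlc) = 1)
    (χ : Kˣ →* ℂˣ) (hχ : SmoothMulChar χ)
    (h1 : Module.finrank ℂ
      ((V ⧸ sCoinvKer ρ) ⧸ tTwistKerT (piZeroT ρ) χ) ≤ 1)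
    (h2 : sInv ρ ⊓ tEigen ρ χ ≠ ⊥) :
    ¬ ∃ f : ↥(CcK K) →ₗ[ℂ] V, Function.Injective f ∧
        GRep.Equivariant (ERep ψ hψlc χ) ρ f := by
  exact statement14_general ψ hψlc hψne ρ hρ c χ h1 h2

end Statements

end PSW
end
end

section
/- Let π be a smooth representation of GL(2,k) on a complex vector space. If a split maximal torus of GL(2,k) acts on a vector v by a character χ of the torus, then v spans a GL(2,k)-invariant line; in particular, GL(2,k) acts on v by the character μ∘det for some smooth character μ of k^×, and χ is the restriction of μ∘det to the torus. -/
noncomputable section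

open scoped Classical

namespace PSW

section Statements

open Aff

variable {K : Type*} [NontriviallyNormedField K] [IsUltrametricDist K] [ProperSpace K]

/-!
Let `U` be a root subgroup of `GL n F`. Since the stabiliser of `v` is open, it contains a
nontrivial element of `U`. The torus acts on `v` by scalars and on `U ≃ F` through all of `Fˣ`, so
conjugating that one element by the torus shows that all of `U` fixes `v`. The root subgroups
generate `SL n F`, and `GL n F` is the product of `SL n F` with a one-dimensional subtorus that
`det` maps isomorphically onto `Fˣ`; hence `GL n F` acts on `v` through `det`.
-/

section GeneralLinear

open Matrix Matrix.SpecialLinearGroup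
open scoped MatrixGroups Topology

section Representation

variable {R G V : Type*} [Semiring R] [Monoid G] [AddCommMonoid V] [Module R V]
  {ρ : Representation R G V} {v : V}

lemma apply_eq_self_of_semiconjBy {t x y : G} {c : Rˣ} (hxy : SemiconjBy t x y)
    (ht : ρ t v = c • v) (hx : ρ x v = v) : ρ y v = v := by
  have h : c • ρ y v = c • v := calc
    c • ρ y v = ρ (y * t) v := by
      rw [map_mul, Module.End.mul_apply, ht, Units.smul_def, Units.smul_def, map_smul]
    _ = ρ (t * x) v := by rw [hxy.eq]
    _ = c • v := by rw [map_mul, Module.End.mul_apply, hx, ht]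
  exact MulAction.injective c h

lemma apply_eq_self_of_forall_semiconjBy {F : Type*} [Field F] [TopologicalSpace F]
    [(𝓝[≠] (0 : F)).NeBot] [TopologicalSpace G] (hρ : IsOpen {g | ρ g v = v})
    {u : F → G} (hu : Continuous u) (hu_zero : u 0 = 1)
    (hscale : ∀ a : Fˣ, ∃ t : G, ∃ c : Rˣ, ρ t v = c • v ∧ ∀ x, SemiconjBy t (u x) (u (a * x)))
    (x : F) : ρ (u x) v = v := by
  have hnhds : ∀ᶠ y in 𝓝 (0 : F), ρ (u y) v = v :=
    (hρ.preimage hu).mem_nhds (by simp [hu_zero])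
  have hne : ∀ᶠ y in 𝓝[≠] (0 : F), y ≠ 0 := eventually_mem_nhdsWithin
  obtain ⟨y, hy, hy_ne⟩ := ((hnhds.filter_mono nhdsWithin_le_nhds).and hne).exists
  obtain rfl | hx_ne := eq_or_ne x 0
  · simp [hu_zero]
  · obtain ⟨t, c, ht, htu⟩ := hscale (Units.mk0 (x / y) (div_ne_zero hx_ne hy_ne))
    refine apply_eq_self_of_semiconjBy ?_ ht hy
    simpa only [Units.val_mk0, div_mul_cancel₀ x hy_ne] using htu y

lemma units_smul_left_injective {R V : Type*} [Ring R] [IsCancelMulZero R] [AddCommGroup V]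
    [Module R V] [Module.IsTorsionFree R V] {v : V} (hv : v ≠ 0) :
    Function.Injective fun c : Rˣ ↦ c • v :=
  fun _ _ h ↦ Units.ext (smul_left_injective R hv h)

end Representation

section Generators

variable {n F R : Type*} [Fintype n] [DecidableEq n] [Field F] [CommRing R]

lemma coe_transvection_mul_transvection_mul_transvection {i j : n} (hij : i ≠ j) {a b : R}
    (hab : a * b = 1) :
    ((transvection hij a * transvection hij.symm (-b) * transvection hij a :
      SpecialLinearGroup n R) : Matrix n n R) =
      1 - single i i 1 - single j j 1 + single i j a - single j i b := by
  simp only [coe_mul, transvection_coe, ← single_neg, mul_add, mul_one, mul_neg, add_mul, one_mul,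
    single_mul_single_same, ne_eq, not_false_eq_true, neg_add_rev, hij.symm, hab, mul_comm b a,
    single_mul_single_of_ne, add_zero, neg_mul, add_neg_cancel_left]
  abel

lemma diag2n_eq_prod_transvection {i j : n} (hij : i ≠ j) {c : F} (hc : c ≠ 0) :
    diag2n hij c hc =
      transvection hij c * transvection hij.symm (-c⁻¹) * transvection hij c *
        (transvection hij (-1) * transvection hij.symm (-(-1)⁻¹) * transvection hij (-1)) := by
  -- With `w(a) = t_ij(a) t_ji(-a⁻¹) t_ij(a)`, monomial by the previous lemma, this is
  -- Steinberg's relation `h(c) = w(c) w(-1)`.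
  refine Subtype.ext ?_
  rw [coe_mul, coe_transvection_mul_transvection_mul_transvection hij (mul_inv_cancel₀ hc),
    coe_transvection_mul_transvection_mul_transvection hij (mul_inv_cancel₀ (by simp)), diag2n_coe]
  ext k l
  simp only [inv_neg, inv_one, mul_sub, mul_add, mul_one, sub_mul, add_mul, one_mul,
    single_mul_single_same, sub_self, ne_eq, hij, hij.symm, not_false_eq_true,
    single_mul_single_of_ne, add_zero, zero_sub, sub_neg_eq_add, sub_add_cancel, sub_zero, zero_add,
    add_sub_cancel_right, mul_neg, Matrix.sub_apply, Matrix.add_apply, Matrix.neg_apply,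
    diagonal_apply, Matrix.one_apply, single_apply]
  grind

lemma closure_range_transvection_eq_top :
    Submonoid.closure (Set.range fun t : TransvectionStruct n F ↦ t.toSpecialLinearGroup) = ⊤ := by
  obtain _ | _ := subsingleton_or_nontrivial n
  · exact Subsingleton.elim _ _
  · refine eq_top_iff.2 fun s _ ↦ ?_
    have htransvection {i j : n} (hij : i ≠ j) (a : F) : transvection hij a ∈ Submonoid.closure
        (Set.range fun t : TransvectionStruct n F ↦ t.toSpecialLinearGroup) :=
      Submonoid.subset_closure ⟨⟨i, j, hij, a⟩, rfl⟩
    refine diagonal_transvection_induction' (· ∈ Submonoid.closure _) s (fun i j hij c hc ↦ ?_)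
      (fun i j hij a ↦ htransvection hij a) fun _ _ ↦ mul_mem
    rw [diag2n_eq_prod_transvection hij hc]
    have hweyl (a : F) := mul_mem (mul_mem (htransvection hij a) (htransvection hij.symm (-a⁻¹)))
      (htransvection hij a)
    exact mul_mem (hweyl c) (hweyl (-1))

end Generators

section DiagonalTorus

variable {n R : Type*} [Fintype n] [DecidableEq n] [CommRing R]

/-- The diagonal torus of `GL n R`, as the homomorphism sending a family of units to the
corresponding diagonal matrix. -/
def diagonalGL : (n → Rˣ) →* GL n R :=
  (Units.map (diagonalRingHom n R).toMonoidHom).comp MulEquiv.piUnits.symm.toMonoidHom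

@[simp]
lemma coe_diagonalGL (d : n → Rˣ) :
    (diagonalGL d : Matrix n n R) = diagonal fun i ↦ (d i : R) :=
  rfl

@[simp]
lemma det_diagonalGL (d : n → Rˣ) : GeneralLinearGroup.det (diagonalGL d) = ∏ i, d i := by
  ext
  simp

lemma continuous_diagonalGL [TopologicalSpace R] :
    Continuous (diagonalGL : (n → Rˣ) → GL n R) :=
  (Continuous.units_map _ continuous_id.matrix_diagonal).comp
    ContinuousMulEquiv.piUnits.symm.continuous

lemma semiconjBy_diagonalGL_transvection (d : n → Rˣ) {i j : n} (hij : i ≠ j) (x : R) :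
    SemiconjBy (diagonalGL d) (toGL (transvection hij x))
      (toGL (transvection hij ((d i / d j : Rˣ) * x))) := by
  ext : 1
  have hentry : (d i : R) * x = (d i / d j : Rˣ) * x * d j := by
    rw [mul_right_comm, ← Units.val_mul, div_mul_cancel]
  have hsingle : (diagonal fun k ↦ (d k : R)) * single i j x =
      single i j ((d i / d j : Rˣ) * x) * diagonal fun k ↦ (d k : R) := by
    ext k l
    simp only [diagonal_mul, mul_diagonal, single_apply]
    grind
  simp [transvection_coe, mul_add, add_mul, hsingle]

lemma exists_eq_diagonalGL_mul_toGL (i : n) (g : GL n R) :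
    ∃ s : SpecialLinearGroup n R,
      g = diagonalGL (Pi.mulSingle i (GeneralLinearGroup.det g)) * toGL s := by
  have hdet : (diagonalGL (Pi.mulSingle i (GeneralLinearGroup.det g)))⁻¹ * g ∈
      Set.range (toGL : SpecialLinearGroup n R → GL n R) := by
    rw [range_toGL]
    simp
  obtain ⟨s, hs⟩ := hdet
  exact ⟨s, by rw [hs, mul_inv_cancel_left]⟩

lemma continuous_toGL_transvection [TopologicalSpace R] [IsTopologicalRing R] {i j : n}
    (hij : i ≠ j) : Continuous fun x : R ↦ toGL (transvection hij x) := by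
  refine continuous_toGL.comp (continuous_induced_rng.2 ?_)
  exact continuous_const.add (continuous_matrix fun k l ↦ by
    simp only [single_apply]
    split_ifs <;> fun_prop)

lemma diagonalGL_fin_two {K : Type*} [Field K] (d : Fin 2 → Kˣ) :
    diagonalGL d = diagGL (d 0) (d 1) := by
  ext i j
  fin_cases i <;> fin_cases j <;> rfl

end DiagonalTorus

section Eigenvector

variable {n F R V : Type*} [Fintype n] [DecidableEq n] [Field F] [TopologicalSpace F]
  [IsTopologicalRing F] [(𝓝[≠] (0 : F)).NeBot] [Semiring R] [AddCommMonoid V] [Module R V]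
  {ρ : Representation R (GL n F) V} {v : V} {χ : (n → Fˣ) →* Rˣ}

lemma apply_toGL_eq_self (hρ : IsOpen {g | ρ g v = v}) (hχ : ∀ d, ρ (diagonalGL d) v = χ d • v)
    (s : SpecialLinearGroup n F) : ρ (toGL s) v = v := by
  have htransvection {i j : n} (hij : i ≠ j) (x : F) : ρ (toGL (transvection hij x)) v = v := by
    refine apply_eq_self_of_forall_semiconjBy hρ (continuous_toGL_transvection hij) (by simp)
      (fun a ↦ ⟨diagonalGL (Pi.mulSingle i a), χ _, hχ _, fun y ↦ ?_⟩) x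
    simpa [hij.symm] using semiconjBy_diagonalGL_transvection (Pi.mulSingle i a) hij y
  have hs : s ∈ Submonoid.closure
      (Set.range fun t : TransvectionStruct n F ↦ t.toSpecialLinearGroup) := by
    rw [closure_range_transvection_eq_top]
    exact Submonoid.mem_top s
  induction hs using Submonoid.closure_induction with
  | mem s hs =>
    obtain ⟨t, rfl⟩ := hs
    exact htransvection t.hij t.c
  | one => simp
  | mul s s' _ _ hs hs' => rw [map_mul, map_mul, Module.End.mul_apply, hs', hs]

lemma apply_eq_mulSingle_det_smul (hρ : IsOpen {g | ρ g v = v})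
    (hχ : ∀ d, ρ (diagonalGL d) v = χ d • v) (i : n) (g : GL n F) :
    ρ g v = χ (Pi.mulSingle i (GeneralLinearGroup.det g)) • v := by
  obtain ⟨s, hs⟩ := exists_eq_diagonalGL_mul_toGL i g
  conv_lhs => rw [hs, map_mul, Module.End.mul_apply, apply_toGL_eq_self hρ hχ, hχ]

end Eigenvector

section SmoothCharacter

variable {n F V : Type*} [Fintype n] [DecidableEq n] [Field F] [TopologicalSpace F]
  [AddCommGroup V] [Module ℂ V]

lemma smoothMulChar_of_apply_eq_det_smul [Nonempty n] {ρ : Representation ℂ (GL n F) V} {v : V}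
    (hv : v ≠ 0) (hρ : IsOpen {g | ρ g v = v}) {μ : Fˣ →* ℂˣ}
    (hμ : ∀ g, ρ g v = μ (GeneralLinearGroup.det g) • v) : SmoothMulChar μ := by
  obtain ⟨i⟩ := ‹Nonempty n›
  have hcont : Continuous fun u : Fˣ ↦ (diagonalGL (Pi.mulSingle i u) : GL n F) :=
    continuous_diagonalGL.comp (continuous_mulSingle (A := fun _ ↦ Fˣ) i)
  have hstab : {u | μ u = 1} = {u | ρ (diagonalGL (Pi.mulSingle i u)) v = v} := by
    ext u
    simp [hμ, (units_smul_left_injective hv).eq_iff' (one_smul ℂˣ v)]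
  rw [SmoothMulChar, hstab]
  exact hρ.preimage hcont

theorem statement17_general [IsTopologicalRing F] [(𝓝[≠] (0 : F)).NeBot] [Nonempty n]
    (ρ : Representation ℂ (GL n F) V) (v : V) (hv : v ≠ 0) (hρ : IsOpen {g | ρ g v = v})
    (g₀ : GL n F) (χ : (n → Fˣ) →* ℂˣ)
    (hχ : ∀ d, ρ (g₀ * diagonalGL d * g₀⁻¹) v = χ d • v) :
    ∃ μ : Fˣ →* ℂˣ, SmoothMulChar μ ∧ (∀ g, ρ g v = μ (GeneralLinearGroup.det g) • v) ∧
      ∀ d, χ d = μ (∏ i, d i) := by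
  obtain ⟨i⟩ := ‹Nonempty n›
  have hρ_conj : IsOpen {g | (ρ.comp (MulAut.conj g₀).toMonoidHom) g v = v} :=
    hρ.preimage (IsTopologicalGroup.continuous_conj g₀)
  have hμ (g : GL n F) :
      ρ g v = χ.comp (MonoidHom.mulSingle _ i) (GeneralLinearGroup.det g) • v := by
    simpa [mul_assoc] using apply_eq_mulSingle_det_smul hρ_conj hχ i (g₀⁻¹ * g * g₀)
  refine ⟨_, smoothMulChar_of_apply_eq_det_smul hv hρ hμ, hμ, fun d ↦ ?_⟩
  simpa using units_smul_left_injective hv ((hχ d).symm.trans (hμ _))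

end SmoothCharacter

end GeneralLinear

theorem statement17
    (hchar : (2 : K) ≠ 0)
    {V : Type*} [AddCommGroup V] [Module ℂ V]
    (ρ : Representation ℂ (Matrix.GeneralLinearGroup (Fin 2) K) V)
    (hρ : ∀ w : V, IsOpen {g : Matrix.GeneralLinearGroup (Fin 2) K | ρ g w = w})
    (v : V) (hv : v ≠ 0)
    (g₀ : Matrix.GeneralLinearGroup (Fin 2) K) (χ : Kˣ × Kˣ →* ℂˣ)
    (hχv : ∀ a b : Kˣ, ρ (g₀ * diagGL a b * g₀⁻¹) v = (χ (a, b) : ℂ) • v) :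
    (∀ g : Matrix.GeneralLinearGroup (Fin 2) K, ρ g v ∈ Submodule.span ℂ {v}) ∧
    ∃ μ : Kˣ →* ℂˣ, SmoothMulChar μ ∧
      (∀ g : Matrix.GeneralLinearGroup (Fin 2) K,
        ρ g v = ((μ (Matrix.GeneralLinearGroup.det g) : ℂˣ) : ℂ) • v) ∧
      ∀ a b : Kˣ, (χ (a, b) : ℂ) = ((μ (a * b) : ℂˣ) : ℂ) := by
  obtain ⟨μ, hμ, hdet, hχμ⟩ := statement17_general ρ v hv (hρ v) g₀
    (χ.comp ((Pi.evalMonoidHom _ 0).prod (Pi.evalMonoidHom _ 1)))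
    fun d ↦ by rw [diagonalGL_fin_two]; exact hχv (d 0) (d 1)
  refine ⟨fun g ↦ ?_, μ, hμ, hdet, fun a b ↦ by simpa using congrArg Units.val (hχμ ![a, b])⟩
  exact hdet g ▸ Submodule.smul_mem _ _ (Submodule.mem_span_singleton_self v)

end Statements

end PSW
end
end
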